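/- Let 𝔉 be an S-closed saturated formation of finite groups containing all supersoluble groups, and let G be a finite group with a normal subgroup H such that G/H ∈ 𝔉. Suppose that every maximal subgroup of every non-cyclic Sylow subgroup of the generalized Fitting subgroup F*(H) that has no supersoluble supplement in G is 𝔘ₛ-quasinormal in G. Then G ∈ 𝔉. -/

import Mathlib

open scoped Pointwise

universe u

/-- `M` is a maximal subgroup of `K` (within the subgroup lattice of the ambient group). -/
def IsMaximalIn {G : Type*} [Group G] (M K : Subgroup G) : Prop :=
  M < K ∧ ∀ L : Subgroup G, M < L → L ≤ K → L = K

/-- `P` is a Sylow `p`-subgroup of the subgroup `E`. -/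
def IsSylowIn {G : Type*} [Group G] (p : ℕ) (P E : Subgroup G) : Prop :=
  P ≤ E ∧ IsPGroup p P ∧ ¬ p ∣ (P.subgroupOf E).index

/-- `H` is s-permutable in `G`: it permutes with every Sylow subgroup of `G`. -/
def SPermutable {G : Type*} [Group G] (H : Subgroup G) : Prop :=
  ∀ q : ℕ, q.Prime → ∀ Q : Subgroup G, IsSylowIn q Q ⊤ →
    (H : Set G) * (Q : Set G) = (Q : Set G) * (H : Set G)

/-- `A/B` is a chief factor of the ambient group. -/
def IsChiefFactor {G : Type*} [Group G] (A B : Subgroup G) : Prop :=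
  A.Normal ∧ B.Normal ∧ B < A ∧ ∀ L : Subgroup G, L.Normal → B < L → L < A → False

/-- The 𝔘-hypercenter: the product of all normal subgroups `N` such that every chief
factor `A/B` with `A ≤ N` has prime order. -/
def UHypercenter (G : Type*) [Group G] : Subgroup G :=
  sSup {N : Subgroup G | N.Normal ∧
    ∀ A B : Subgroup G, IsChiefFactor A B → A ≤ N → (B.relIndex A).Prime}

/-- The 𝔖-hypercenter: the product of all normal subgroups `N` such that every chief
factor `A/B` with `A ≤ N` is abelian with `G/C_G(A/B)` soluble. -/
def SHypercenter (G : Type*) [Group G] : Subgroup G :=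
  sSup {N : Subgroup G | N.Normal ∧
    ∀ A B : Subgroup G, IsChiefFactor A B → A ≤ N →
      (∀ a ∈ A, ∀ b ∈ A, a * b * a⁻¹ * b⁻¹ ∈ B) ∧
      ∃ C : Subgroup G, ∃ _ : C.Normal,
        (∀ g : G, g ∈ C ↔ ∀ h ∈ A, g * h * g⁻¹ * h⁻¹ ∈ B) ∧ IsSolvable (G ⧸ C)}

/-- `H` is 𝔘ₛ-quasinormal in `G`. -/
def UsQuasinormal {G : Type*} [Group G] (H : Subgroup G) : Prop :=
  ∃ T : Subgroup G, T.Normal ∧ SPermutable (H ⊔ T) ∧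
    ∀ x ∈ H ⊓ T,
      (QuotientGroup.mk x : G ⧸ H.normalCore) ∈ UHypercenter (G ⧸ H.normalCore)

/-- `H` is 𝔖ₛ-quasinormal in `G`. -/
def SsQuasinormal {G : Type*} [Group G] (H : Subgroup G) : Prop :=
  ∃ T : Subgroup G, T.Normal ∧ SPermutable (H ⊔ T) ∧
    ∀ x ∈ H ⊓ T,
      (QuotientGroup.mk x : G ⧸ H.normalCore) ∈ SHypercenter (G ⧸ H.normalCore)

/-- A group is supersoluble if it has a chain of subgroups, each normal in the whole
group, reaching from `⊥` to `⊤`, with all successive factors cyclic. -/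
def IsSupersoluble (G : Type*) [Group G] : Prop :=
  ∃ (k : ℕ) (c : Fin (k + 1) → Subgroup G),
    c 0 = ⊥ ∧ c (Fin.last k) = ⊤ ∧ (∀ i, (c i).Normal) ∧
    (∀ i : Fin k, c i.castSucc ≤ c i.succ) ∧
    ∀ i : Fin k, ∃ g ∈ c i.succ, ∀ x ∈ c i.succ, ∃ m : ℤ, x⁻¹ * g ^ m ∈ c i.castSucc

/-- `A` is subnormal in `G`. -/
def IsSubnormal {G : Type*} [Group G] (A : Subgroup G) : Prop :=
  ∃ (n : ℕ) (c : Fin (n + 1) → Subgroup G), c 0 = A ∧ c (Fin.last n) = ⊤ ∧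
    ∀ i : Fin n, c i.castSucc ≤ c i.succ ∧
      ∀ x ∈ c i.succ, ∀ a ∈ c i.castSucc, x * a * x⁻¹ ∈ c i.castSucc

/-- `H` has a supersoluble supplement in the ambient group. -/
def HasSupersolubleSupplement {G : Type*} [Group G] (H : Subgroup G) : Prop :=
  ∃ T : Subgroup G, IsSupersoluble T ∧ (H : Set G) * (T : Set G) = Set.univ

/-- A group is `p`-nilpotent if it has a normal subgroup of order prime to `p`
and of `p`-power index (a normal `p`-complement). -/
def IsPNilpotent (p : ℕ) (G : Type*) [Group G] : Prop :=
  ∃ N : Subgroup G, N.Normal ∧ Nat.Coprime (Nat.card N) p ∧ ∃ k : ℕ, N.index = p ^ k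

/-- `H` has a `p`-nilpotent supplement in the ambient group. -/
def HasPNilpotentSupplement {G : Type*} [Group G] (p : ℕ) (H : Subgroup G) : Prop :=
  ∃ T : Subgroup G, IsPNilpotent p T ∧ (H : Set G) * (T : Set G) = Set.univ

/-- `H` is an `n`-maximal subgroup of `P`: there is a chain
`H = Hₙ < ⋯ < H₁ < H₀ = P` with each term maximal in the preceding one. -/
def IsNMaximalIn {G : Type*} [Group G] (n : ℕ) (H P : Subgroup G) : Prop :=
  ∃ c : Fin (n + 1) → Subgroup G, c 0 = P ∧ c (Fin.last n) = H ∧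
    ∀ i : Fin n, IsMaximalIn (c i.succ) (c i.castSucc)

/-- A group is quasinilpotent if every element induces an inner automorphism
on every chief factor. -/
def IsQuasinilpotentGroup (G : Type*) [Group G] : Prop :=
  ∀ A B : Subgroup G, IsChiefFactor A B →
    ∀ x : G, ∃ y ∈ A, ∀ h ∈ A, (x * h * x⁻¹) * (y * h * y⁻¹)⁻¹ ∈ B

/-- The generalized Fitting subgroup: the product of all normal quasinilpotent
subgroups. -/
def generalizedFitting (G : Type*) [Group G] : Subgroup G :=
  sSup {N : Subgroup G | N.Normal ∧ IsQuasinilpotentGroup N}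

/-- The generalized Fitting subgroup of a subgroup `H`, as a subgroup of `G`. -/
def FStarIn {G : Type*} [Group G] (H : Subgroup G) : Subgroup G :=
  (generalizedFitting H).map H.subtype

/-- The Fitting subgroup: the product of all nilpotent normal subgroups. -/
def fittingSubgroup (G : Type*) [Group G] : Subgroup G :=
  sSup {N : Subgroup G | N.Normal ∧ Group.IsNilpotent N}

/-- The Fitting subgroup of a subgroup `H`, as a subgroup of `G`. -/
def FittingIn {G : Type*} [Group G] (H : Subgroup G) : Subgroup G :=
  (fittingSubgroup H).map H.subtype

section
set_option linter.all false

namespace FS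

def PStep {G : Type*} [Group G] (B A : Subgroup G) : Prop :=
  B.Normal ∧ A.Normal ∧ B ≤ A ∧ (B.relIndex A).Prime

def PChain {G : Type*} [Group G] (B A : Subgroup G) : Prop := Relation.ReflTransGen PStep B A

section
variable {G : Type*} [Group G] 

theorem PChain.le {B A : Subgroup G} (h : PChain B A) : B ≤ A := by
  induction h with
  | refl => exact le_rfl
  | tail _ h ih => exact ih.trans h.2.2.1

theorem PChain.normal {B A : Subgroup G} (h : PChain B A) (hB : B.Normal) : A.Normal := by
  induction h with
  | refl => exact hB
  | tail _ h ih => exact h.2.1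

theorem PChain.map' {G' : Type*} [Group G'] (f : Subgroup G → Subgroup G')
    (hn : ∀ X, X.Normal → (f X).Normal) (hm : Monotone f)
    (hd : ∀ B A, B.Normal → A.Normal → B ≤ A → (f B).relIndex (f A) ∣ B.relIndex A)
    {B A : Subgroup G} (h : PChain B A) : PChain (f B) (f A) := by
  induction h with
  | refl => exact Relation.ReflTransGen.refl
  | @tail b c hbc h ih =>
    obtain ⟨h1, h2, h3, h4⟩ := h
    rcases (Nat.dvd_prime h4).1 (hd _ _ h1 h2 h3) with h5 | h5
    · have : f b = f c := le_antisymm (hm h3) (Subgroup.relIndex_eq_one.1 h5)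
      rw [← this]; exact ih
    · exact ih.tail ⟨hn _ h1, hn _ h2, hm h3, h5 ▸ h4⟩

theorem relIndex_dvd_right {B A K : Subgroup G} (hB : B.Normal) (hK : K ≤ A) :
    B.relIndex K ∣ B.relIndex A := by
  have h1 : B.relIndex K = B.relIndex (K ⊔ B) := (Subgroup.relIndex_sup_right K B).symm
  have h2 : B.relIndex A = B.relIndex (A ⊔ B) := (Subgroup.relIndex_sup_right A B).symm
  rw [h1, h2]
  exact Dvd.intro _ (Subgroup.relIndex_mul_relIndex B (K ⊔ B) (A ⊔ B) le_sup_right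
    (sup_le_sup_right hK B))

theorem PChain.inf {B A X : Subgroup G} (hX : X.Normal) (h : PChain B A) :
    PChain (B ⊓ X) (A ⊓ X) := by
  refine PChain.map' (fun Y => Y ⊓ X) (fun Y hY => ?_) (fun a b h => inf_le_inf_right X h) ?_ h
  · exact Subgroup.normal_inf_normal Y X
  · intro B A hB hA hBA
    have : (B ⊓ X).relIndex (A ⊓ X) = B.relIndex (A ⊓ X) := by
      rw [← Subgroup.inf_relIndex_right B (A ⊓ X)]
      congr 1
      rw [← inf_assoc, inf_eq_left.2 hBA]
    show _ ∣ _
    rw [this]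
    exact relIndex_dvd_right hB inf_le_left

theorem PChain.sup {B A X : Subgroup G} (hX : X.Normal) (h : PChain B A) :
    PChain (B ⊔ X) (A ⊔ X) := by
  refine PChain.map' (fun Y => Y ⊔ X) (fun Y hY => ?_) (fun a b h => sup_le_sup_right h X) ?_ h
  · exact Subgroup.sup_normal Y X
  · intro B A hB hA hBA
    have e : A ⊔ X = A ⊔ (B ⊔ X) := by
      rw [← sup_assoc, sup_eq_left.2 hBA]
    have : (B ⊔ X).Normal := Subgroup.sup_normal B X
    show _ ∣ _
    rw [e, Subgroup.relIndex_sup_right]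
    exact Subgroup.relIndex_dvd_of_le_left A le_sup_left

theorem PChain.chief {D N : Subgroup G} (h : PChain D N) (hc : IsChiefFactor N D) :
    (D.relIndex N).Prime := by
  rcases Relation.ReflTransGen.cases_head h with h | ⟨C, h1, h2⟩
  · exact absurd h hc.2.2.1.ne
  · obtain ⟨h3, h4, h5, h6⟩ := h1
    have hne : D ≠ C := by
      rintro rfl; simp at h6; exact Nat.not_prime_one h6
    have hCN : C ≤ N := PChain.le h2
    rcases eq_or_lt_of_le hCN with h7 | h7
    · rwa [← h7]
    · exact (hc.2.2.2 C h4 (lt_of_le_of_ne h5 hne) h7).elim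

theorem exists_chief [Finite G] {B A : Subgroup G} (hB : B.Normal) (hA : A.Normal) (h : B < A) :
    ∃ N, IsChiefFactor N B ∧ N ≤ A := by
  have hne : {N : Subgroup G | N.Normal ∧ B < N ∧ N ≤ A}.Nonempty := ⟨A, hA, h, le_rfl⟩
  obtain ⟨N, hN, hmin⟩ := wellFounded_lt.has_min _ hne
  refine ⟨N, ⟨hN.1, hB, hN.2.1, fun L hL h1 h2 => hmin L ⟨hL, h1, h2.le.trans hN.2.2⟩ h2⟩, hN.2.2⟩

theorem pchain_of_chief [Finite G] {N : Subgroup G} (hN : N.Normal)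
    (h : ∀ A B : Subgroup G, IsChiefFactor A B → A ≤ N → (B.relIndex A).Prime) :
    ∀ B : Subgroup G, B.Normal → B ≤ N → PChain B N := by
  intro B
  induction B using WellFoundedGT.induction with
  | ind B ih =>
    intro hB hBN
    rcases eq_or_lt_of_le hBN with h1 | h1
    · rw [h1]; exact Relation.ReflTransGen.refl
    · obtain ⟨A, hA, hAN⟩ := exists_chief hB hN h1
      exact Relation.ReflTransGen.head ⟨hB, hA.1, hA.2.2.1.le, h A B hA hAN⟩
        (ih A hA.2.2.1 hA.1 hAN)

theorem uhyper_le [Finite G] : ∃ M : Subgroup G, M.Normal ∧ PChain ⊥ M ∧ UHypercenter G ≤ M := by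
  have hfin : {M : Subgroup G | M.Normal ∧ PChain ⊥ M}.Finite := Set.toFinite _
  have hne : {M : Subgroup G | M.Normal ∧ PChain ⊥ M}.Nonempty :=
    ⟨⊥, inferInstance, Relation.ReflTransGen.refl⟩
  obtain ⟨M, hM⟩ := hfin.exists_maximal hne
  refine ⟨M, hM.1.1, hM.1.2, sSup_le ?_⟩
  rintro S ⟨hS, hS'⟩
  have hc := pchain_of_chief hS hS' ⊥ inferInstance bot_le
  have h2 : PChain M (S ⊔ M) := by
    have := PChain.sup hM.1.1 hc
    rwa [bot_sup_eq] at this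
  have hMn := hM.1.1
  have h3 : S ⊔ M ≤ M := hM.2 ⟨Subgroup.sup_normal S M, hM.1.2.trans h2⟩ le_sup_right
  exact le_sup_left.trans h3

theorem PChain.solvable [Finite G] {B A : Subgroup G} (h : PChain B A) (hB : Group.IsSolvable B) :
    Group.IsSolvable A := by
  induction h with
  | refl => exact hB
  | @tail b c hbc h ih =>
    obtain ⟨h1, h2, h3, h4⟩ := h
    have : (b.subgroupOf c).Normal := inferInstance
    have hp : Fact (b.relIndex c).Prime := ⟨h4⟩
    have hcy : IsCyclic (c ⧸ b.subgroupOf c) := isCyclic_of_prime_card (p := b.relIndex c) rfl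
    have : Group.IsSolvable (c ⧸ b.subgroupOf c) := by
      letI := hcy.commGroup
      infer_instance
    have : Group.IsSolvable (b.subgroupOf c) := by
      exact Group.isSolvable_of_isSolvable_injective (f := (Subgroup.subgroupOfEquivOfLe h3).toMonoidHom)
        (Subgroup.subgroupOfEquivOfLe h3).injective
    exact Group.isSolvable_of_ker_le_range (b.subgroupOf c).subtype (QuotientGroup.mk' (b.subgroupOf c))
      (by simp)

theorem relIndex_comap_mk {N : Subgroup G} [N.Normal] (L : Subgroup (G ⧸ N)) :
    N.relIndex (L.comap (QuotientGroup.mk' N)) = Nat.card L := by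
  have e : N = (⊥ : Subgroup (G ⧸ N)).comap (QuotientGroup.mk' N) := by
    rw [MonoidHom.comap_bot, QuotientGroup.ker_mk']
  have e2 : ∀ K : Subgroup G, N.relIndex K =
      ((⊥ : Subgroup (G ⧸ N)).comap (QuotientGroup.mk' N)).relIndex K := fun K => by rw [← e]
  rw [e2, Subgroup.relIndex_comap, Subgroup.map_comap_eq_self_of_surjective
    (QuotientGroup.mk'_surjective N), Subgroup.relIndex_bot_left]

theorem pchain_of_abelian [Finite G] : ∀ N : Subgroup G, N.Normal →
    (∀ g h : G, g * h * g⁻¹ * h⁻¹ ∈ N) → PChain N ⊤ := by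
  intro N
  induction N using WellFoundedGT.induction with
  | ind N ih =>
    intro hN hc
    by_cases hT : N = ⊤
    · rw [hT]; exact Relation.ReflTransGen.refl
    · have h1 : Nat.card (G ⧸ N) ≠ 1 := by
        intro h; exact hT (Subgroup.index_eq_one.1 h)
      obtain ⟨p, hp, hpd⟩ := Nat.exists_prime_and_dvd h1
      haveI := Fact.mk hp
      obtain ⟨x, hx⟩ := exists_prime_orderOf_dvd_card' p hpd
      set C := (Subgroup.zpowers x).comap (QuotientGroup.mk' N) with hC
      have hNC : N ≤ C := by
        intro n hn
        rw [hC, Subgroup.mem_comap]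
        have : (QuotientGroup.mk' N) n = 1 := (QuotientGroup.eq_one_iff n).2 hn
        rw [this]; exact one_mem _
      have hr : N.relIndex C = p := by
        rw [hC, relIndex_comap_mk, Nat.card_zpowers, hx]
      have hCn : C.Normal := ⟨fun n hn g => by
        have := C.mul_mem (hNC (hc g n)) hn
        simpa [mul_assoc] using this⟩
      have hlt : N < C := by
        refine lt_of_le_of_ne hNC ?_
        rintro h
        rw [← h, Subgroup.relIndex_self] at hr
        exact hp.one_lt.ne hr
      exact Relation.ReflTransGen.head ⟨hN, hCn, hNC, hr ▸ hp⟩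
        (ih C hlt hCn fun g h => hNC (hc g h))

theorem pchain_of_cyclic [Finite G] (A : Subgroup G) (hA : A.Normal) (g : G) (hg : g ∈ A) :
    ∀ B : Subgroup G, B.Normal → B ≤ A → (∀ x ∈ A, ∃ m : ℤ, x⁻¹ * g ^ m ∈ B) → PChain B A := by
  intro B
  induction B using WellFoundedGT.induction with
  | ind B ih =>
    intro hB hBA hc
    rcases eq_or_lt_of_le hBA with h1 | h1
    · rw [h1]; exact Relation.ReflTransGen.refl
    · have h2 : Nat.card (A.map (QuotientGroup.mk' B)) ≠ 1 := by
        intro h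
        rw [Subgroup.card_eq_one, Subgroup.map_eq_bot_iff, QuotientGroup.ker_mk'] at h
        exact h1.not_ge h
      obtain ⟨p, hp, hpd⟩ := Nat.exists_prime_and_dvd h2
      haveI := Fact.mk hp
      obtain ⟨x, hx⟩ := exists_prime_orderOf_dvd_card' p hpd
      have hx' : orderOf (x : G ⧸ B) = p := by rw [Subgroup.orderOf_coe, hx]
      set C := (Subgroup.zpowers (x : G ⧸ B)).comap (QuotientGroup.mk' B) with hC
      have hNC : B ≤ C := by
        intro n hn
        rw [hC, Subgroup.mem_comap]
        have : (QuotientGroup.mk' B) n = 1 := (QuotientGroup.eq_one_iff n).2 hn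
        rw [this]; exact one_mem _
      have hr : B.relIndex C = p := by
        rw [hC, relIndex_comap_mk, Nat.card_zpowers, hx']
      have hcy : ∀ a ∈ A, ∃ m : ℤ, (a : G ⧸ B) = (g : G ⧸ B) ^ m := by
        intro a ha
        obtain ⟨m, hm⟩ := hc a ha
        exact ⟨m, by rw [← QuotientGroup.mk_zpow]; exact QuotientGroup.eq.2 hm⟩
      obtain ⟨a, ha, hax⟩ := x.2
      obtain ⟨j, hj⟩ := hcy a ha
      have hxg : (x : G ⧸ B) = (g : G ⧸ B) ^ j := by rw [← hj]; exact hax.symm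
      have hCn : C.Normal := by
        have : (Subgroup.zpowers (x : G ⧸ B)).Normal := by
          refine ⟨fun n hn y => ?_⟩
          obtain ⟨i, rfl⟩ := Subgroup.mem_zpowers_iff.1 hn
          obtain ⟨y, rfl⟩ := QuotientGroup.mk'_surjective B y
          obtain ⟨k, hk⟩ := hcy _ (hA.conj_mem g hg y)
          have hk' : (QuotientGroup.mk' B y) * (g : G ⧸ B) * (QuotientGroup.mk' B y)⁻¹ =
            (g : G ⧸ B) ^ k := hk
          rw [Subgroup.mem_zpowers_iff]
          refine ⟨i * k, ?_⟩
          rw [← conj_zpow, hxg, ← conj_zpow, hk', ← zpow_mul, ← zpow_mul, ← zpow_mul]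
          congr 1; ring
        exact Subgroup.Normal.comap this _
      have hlt : B < C := by
        refine lt_of_le_of_ne hNC ?_
        rintro h
        rw [← h, Subgroup.relIndex_self] at hr
        exact hp.one_lt.ne hr
      have hCA : C ≤ A := by
        intro c hcC
        obtain ⟨i, hi⟩ := Subgroup.mem_zpowers_iff.1 hcC
        have : (x : G ⧸ B) ^ i = ((a ^ i : G) : G ⧸ B) := by
          rw [← hax]; rfl
        rw [this] at hi
        have h5 : (a ^ i)⁻¹ * c ∈ B := QuotientGroup.eq.1 hi
        have h6 := A.mul_mem (A.zpow_mem ha i) (hBA h5)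
        simpa using h6
      exact Relation.ReflTransGen.head ⟨hB, hCn, hNC, hr ▸ hp⟩
        (ih C hlt hCn hCA fun y hy => by
          obtain ⟨m, hm⟩ := hc y hy
          exact ⟨m, hNC hm⟩)

theorem pchain_of_supersoluble [Finite G] (h : IsSupersoluble G) : PChain (⊥ : Subgroup G) ⊤ := by
  obtain ⟨k, c, h0, hl, hn, hle, hcy⟩ := h
  have : ∀ i : ℕ, ∀ hi : i < k + 1, PChain ⊥ (c ⟨i, hi⟩) := by
    intro i
    induction i with
    | zero => intro hi; have : c ⟨0, hi⟩ = ⊥ := h0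
              rw [this]; exact Relation.ReflTransGen.refl
    | succ i ih =>
      intro hi
      obtain ⟨g, hg, hx⟩ := hcy ⟨i, by omega⟩
      exact (ih (by omega)).trans (pchain_of_cyclic _ (hn _) g hg _ (hn _) (hle ⟨i, by omega⟩) hx)
  rw [← hl]
  exact this k (by omega)

theorem supersoluble_of_pchain [Finite G] (h : PChain (⊥ : Subgroup G) ⊤) : IsSupersoluble G := by
  have key : ∀ A : Subgroup G, PChain ⊥ A → ∃ (k : ℕ) (c : Fin (k + 1) → Subgroup G),
    c 0 = ⊥ ∧ c (Fin.last k) = A ∧ (∀ i, (c i).Normal) ∧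
    (∀ i : Fin k, c i.castSucc ≤ c i.succ) ∧
    ∀ i : Fin k, ∃ g ∈ c i.succ, ∀ x ∈ c i.succ, ∃ m : ℤ, x⁻¹ * g ^ m ∈ c i.castSucc := by
    intro A hA
    induction hA with
    | refl => exact ⟨0, fun _ => ⊥, rfl, rfl, fun _ => inferInstance, fun i => i.elim0,
        fun i => i.elim0⟩
    | @tail B A hbc h ih =>
      obtain ⟨h1, h2, h3, h4⟩ := h
      obtain ⟨k, c, c0, cl, cn, cle, ccy⟩ := ih
      refine ⟨k + 1, Fin.snoc (α := fun _ => Subgroup G) c A, ?_, by simp, ?_, ?_, ?_⟩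
      · have : (0 : Fin (k + 2)) = Fin.castSucc (0 : Fin (k + 1)) := rfl
        rw [this, Fin.snoc_castSucc, c0]
      · intro i
        refine Fin.lastCases ?_ (fun j => ?_) i
        · simpa using h2
        · simpa using cn j
      · intro i
        refine Fin.lastCases ?_ (fun j => ?_) i
        · simpa [cl] using h3
        · rw [Fin.snoc_castSucc, Fin.succ_castSucc, Fin.snoc_castSucc]; exact cle j
      · intro i
        refine Fin.lastCases ?_ (fun j => ?_) i
        · simp only [Fin.succ_last, Fin.snoc_last, Fin.snoc_castSucc, cl]
          haveI : Fact (B.relIndex A).Prime := ⟨h4⟩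
          have hcy : IsCyclic (A ⧸ B.subgroupOf A) :=
            isCyclic_of_prime_card (p := B.relIndex A) rfl
          obtain ⟨g, hg⟩ := hcy.exists_generator
          obtain ⟨g, rfl⟩ := QuotientGroup.mk'_surjective _ g
          refine ⟨g, g.2, fun x hx => ?_⟩
          obtain ⟨m, hm⟩ := Subgroup.mem_zpowers_iff.1 (hg (QuotientGroup.mk' _ ⟨x, hx⟩))
          refine ⟨m, ?_⟩
          rw [← map_zpow] at hm
          have := QuotientGroup.eq.1 hm.symm
          exact this
        · rw [Fin.snoc_castSucc, Fin.succ_castSucc, Fin.snoc_castSucc]; exact ccy j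
  exact key ⊤ h

end

structure Form (𝔉 : ∀ (X : Type u) [Group X], Prop) : Prop where
  hhom : ∀ (X Y : Type u) [Group X] [Group Y] [Finite X] [Finite Y] (f : X →* Y),
      Function.Surjective f → 𝔉 X → 𝔉 Y
  hres : ∀ (X : Type u) [Group X] [Finite X] (M N : Subgroup X)
      (_ : M.Normal) (_ : N.Normal), 𝔉 (X ⧸ M) → 𝔉 (X ⧸ N) → 𝔉 (X ⧸ (M ⊓ N))
  hsat : ∀ (X : Type u) [Group X] [Finite X], 𝔉 (X ⧸ frattini X) → 𝔉 X
  hU : ∀ (X : Type u) [Group X] [Finite X], IsSupersoluble X → 𝔉 X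

theorem PChain.map_surj {G G' : Type*} [Group G] [Group G'] (f : G →* G')
    (hf : Function.Surjective f) {B A : Subgroup G} (h : PChain B A) :
    PChain (B.map f) (A.map f) := by
  refine PChain.map' (fun X => X.map f) (fun X hX => hX.map f hf)
    (fun a b h => Subgroup.map_mono h) ?_ h
  intro B A hB hA hBA
  show (B.map f).relIndex (A.map f) ∣ _
  rw [Subgroup.relIndex_map_map]
  have : A ⊔ f.ker = A ⊔ (B ⊔ f.ker) := by rw [← sup_assoc, sup_eq_left.2 hBA]
  have hn : (B ⊔ f.ker).Normal := Subgroup.sup_normal B f.ker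
  rw [this, Subgroup.relIndex_sup_right]
  exact Subgroup.relIndex_dvd_of_le_left A le_sup_left

theorem supersoluble_quot {G : Type*} [Group G] [Finite G] (D : Subgroup G) [D.Normal]
    (h : PChain D ⊤) : IsSupersoluble (G ⧸ D) := by
  apply supersoluble_of_pchain
  have := PChain.map_surj (QuotientGroup.mk' D) (QuotientGroup.mk'_surjective D) h
  rwa [QuotientGroup.map_mk'_self, Subgroup.map_top_of_surjective _
    (QuotientGroup.mk'_surjective D)] at this

theorem comm_mem_centralizer {X : Type*} [Group X] [Finite X] (N : Subgroup X) [N.Normal]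
    (hN : (Nat.card N).Prime) (g h : X) :
    g * h * g⁻¹ * h⁻¹ ∈ Subgroup.centralizer (N : Set X) := by
  haveI := Fact.mk hN
  have hcy : IsCyclic N := isCyclic_of_prime_card (p := Nat.card N) rfl
  have hcomm : ∀ a b : MulAut N, a * b = b * a := by
    intro a b
    apply (IsCyclic.mulAutMulEquiv N).injective
    rw [map_mul, map_mul, mul_comm]
  have h1 : (MulAut.conjNormal (g * h * g⁻¹ * h⁻¹) : MulAut N) = 1 := by
    rw [map_mul, map_mul, map_mul, hcomm (MulAut.conjNormal g), map_inv, map_inv]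
    group
  rw [Subgroup.mem_centralizer_iff]
  intro n hn
  have h2 := congrArg (fun f : MulAut N => ((f ⟨n, hn⟩ : N) : X)) h1
  simp only [MulAut.conjNormal_apply, MulAut.one_apply] at h2
  exact (mul_inv_eq_iff_eq_mul.1 h2).symm

variable {𝔉 : ∀ (X : Type u) [Group X], Prop}

theorem Form.quot_le (hF : Form 𝔉) {X : Type u} [Group X] [Finite X] {A B : Subgroup X}
    [A.Normal] [B.Normal] (h : A ≤ B) (h1 : 𝔉 (X ⧸ A)) : 𝔉 (X ⧸ B) := by
  refine hF.hhom _ _ (QuotientGroup.map A B (MonoidHom.id X) h) ?_ h1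
  intro y
  obtain ⟨x, rfl⟩ := QuotientGroup.mk'_surjective B y
  exact ⟨QuotientGroup.mk' A x, rfl⟩

theorem Form.of_bot (hF : Form 𝔉) {X : Type u} [Group X] [Finite X] {A : Subgroup X}
    [A.Normal] (h : A = ⊥) (h1 : 𝔉 (X ⧸ A)) : 𝔉 X := by
  refine hF.hhom _ _ (QuotientGroup.lift A (MonoidHom.id X) (fun x hx => ?_)) ?_ h1
  · rw [h] at hx; exact hx
  · intro y; exact ⟨QuotientGroup.mk' A y, rfl⟩

theorem Form.step (hF : Form 𝔉) {X : Type u} [Group X] [Finite X] (N : Subgroup X)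
    [N.Normal] (hN : (Nat.card N).Prime) (h : 𝔉 (X ⧸ N)) : 𝔉 X := by
  by_cases hfr : N ≤ frattini X
  · exact hF.hsat X (hF.quot_le hfr h)
  · have : ∃ M : Subgroup X, IsCoatom M ∧ ¬ N ≤ M := by
      by_contra hcon
      push Not at hcon
      apply hfr
      rw [frattini, Order.radical]
      exact le_iInf₂ hcon
    obtain ⟨M, hM, hNM⟩ := this
    have hsup : N ⊔ M = ⊤ := by
      have : M < N ⊔ M := lt_of_le_of_ne le_sup_right (fun h => hNM (h ▸ le_sup_left))
      exact hM.2 _ this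
    have hinf : M ⊓ N = ⊥ := by
      have h1 : Nat.card (M ⊓ N : Subgroup X) ∣ Nat.card N :=
        Subgroup.card_dvd_of_le inf_le_right
      rcases (Nat.dvd_prime hN).1 h1 with h2 | h2
      · exact (Subgroup.card_eq_one).1 h2
      · have := Subgroup.eq_of_le_of_card_ge (inf_le_right : M ⊓ N ≤ N) h2.ge
        exact absurd (inf_eq_right.1 this) hNM
    set Cn := Subgroup.centralizer (N : Set X) with hCn
    have hCnn : Cn.Normal := by rw [hCn]; infer_instance
    have hNC : N ≤ Cn := by
      haveI := Fact.mk hN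
      have hcy : IsCyclic N := isCyclic_of_prime_card (p := Nat.card N) rfl
      intro n hn
      rw [hCn, Subgroup.mem_centralizer_iff]
      intro m hm
      have := hcy.commGroup.mul_comm ⟨m, hm⟩ ⟨n, hn⟩
      exact congrArg Subtype.val this
    set D := M ⊓ Cn with hD
    have hDn : D.Normal := by
      rw [← Subgroup.normalizer_eq_top_iff, eq_top_iff, ← hsup, sup_le_iff]
      constructor
      · intro n hn
        rw [Subgroup.mem_normalizer_iff]
        have key : ∀ n ∈ N, ∀ d ∈ D, n * d * n⁻¹ = d := by
          intro n hn d hd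
          have := (Subgroup.mem_centralizer_iff.1 hd.2) n hn
          rw [this]; group
        intro d
        constructor
        · intro hd; rw [key n hn d hd]; exact hd
        · intro hd
          have := key n⁻¹ (inv_mem hn) _ hd
          have h3 : d = n * d * n⁻¹ := by
            rw [← this]; group
          rw [h3]; exact hd
      · intro m hm
        rw [Subgroup.mem_normalizer_iff]
        intro d
        constructor
        · intro hd
          exact ⟨M.mul_mem (M.mul_mem hm hd.1) (M.inv_mem hm), hCnn.conj_mem _ hd.2 m⟩
        · intro hd
          have h1 := M.mul_mem (M.mul_mem (M.inv_mem hm) hd.1) hm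
          have h2 := hCnn.conj_mem _ hd.2 m⁻¹
          refine ⟨?_, ?_⟩
          · show d ∈ M; convert h1 using 1; group
          · show d ∈ Cn; convert h2 using 1; group
    have hDN : D ⊓ N = ⊥ := by
      rw [eq_bot_iff, ← hinf]; exact inf_le_inf_right N inf_le_left
    have hss : IsSupersoluble (X ⧸ D) := by
      apply supersoluble_quot
      have h1 : D.relIndex (N ⊔ D) = Nat.card N := by
        rw [Subgroup.relIndex_sup_right, ← Subgroup.inf_relIndex_right, hDN,
          Subgroup.relIndex_bot_left]
      have hND : (N ⊔ D).Normal := Subgroup.sup_normal N D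
      refine Relation.ReflTransGen.head ⟨hDn, hND, le_sup_right, h1 ▸ hN⟩ ?_
      apply pchain_of_abelian _ hND
      intro g h
      have h2 := comm_mem_centralizer N hN g h
      have h3 : g * h * g⁻¹ * h⁻¹ ∈ N ⊔ M := by rw [hsup]; trivial
      obtain ⟨n, hn, m, hm, hnm⟩ := Subgroup.mem_sup_of_normal_left.1 h3
      rw [← hnm]
      refine Subgroup.mul_mem_sup hn ⟨hm, ?_⟩
      have h4 : m = n⁻¹ * (g * h * g⁻¹ * h⁻¹) := by rw [← hnm]; group
      rw [h4]
      exact Cn.mul_mem (Cn.inv_mem (hNC hn)) h2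
    exact hF.of_bot hDN (hF.hres X D N hDn inferInstance (hF.hU _ hss) h)

theorem Form.step' (hF : Form 𝔉) {G : Type u} [Group G] [Finite G] (B A : Subgroup G)
    [B.Normal] [A.Normal] (hBA : B ≤ A) (hp : (B.relIndex A).Prime) (h : 𝔉 (G ⧸ A)) :
    𝔉 (G ⧸ B) := by
  have hn : (A.map (QuotientGroup.mk' B)).Normal :=
    Subgroup.Normal.map inferInstance _ (QuotientGroup.mk'_surjective B)
  refine hF.step (A.map (QuotientGroup.mk' B)) ?_ ?_
  · have := relIndex_comap_mk (N := B) (A.map (QuotientGroup.mk' B))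
    rw [Subgroup.comap_map_eq, QuotientGroup.ker_mk', sup_eq_left.2 hBA] at this
    rwa [← this]
  · exact hF.hhom _ _ (QuotientGroup.quotientQuotientEquivQuotient B A hBA).symm.toMonoidHom
      (QuotientGroup.quotientQuotientEquivQuotient B A hBA).symm.surjective h

theorem Form.chain (hF : Form 𝔉) {G : Type u} [Group G] [Finite G] (B A : Subgroup G)
    [hB : B.Normal] [A.Normal] (hc : PChain B A) (h : 𝔉 (G ⧸ A)) :
    𝔉 (G ⧸ B) := by
  suffices H : ∀ hB : B.Normal, 𝔉 (G ⧸ B) from H hB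
  refine Relation.ReflTransGen.head_induction_on
    (motive := fun (B : Subgroup G) _ => ∀ hB : B.Normal, 𝔉 (G ⧸ B)) hc ?_ ?_
  · intro _; exact h
  · intro B C hBC hCA ih hB
    obtain ⟨h1, h2, h3, h4⟩ := hBC
    exact hF.step' B C h3 h4 (ih h2)

theorem exists_fixed {G : Type*} [Group G] [Finite G] {p q : ℕ} (hp : p.Prime) (hq : q.Prime)
    (hne : q ≠ p) {P P' : Subgroup G} (hP' : P'.Normal) (hP : IsPGroup p P') (x : G)
    (hx : IsPGroup q (Subgroup.zpowers x)) (g : G) (hxg : ∀ y ∈ Subgroup.zpowers x,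
      g⁻¹ * (y * g * y⁻¹) ∈ P') : ∃ a ∈ Subgroup.centralizer ({x} : Set G), g⁻¹ * a ∈ P' := by
  haveI := Fact.mk hp
  haveI := Fact.mk hq
  let α := {a : G // g⁻¹ * a ∈ P'}
  let act : MulAction (Subgroup.zpowers x) α :=
    { smul := fun y a => ⟨y * a.1 * (y : G)⁻¹, by
        have h1 := P'.mul_mem (hxg y y.2) (hP'.conj_mem _ a.2 (y : G))
        convert h1 using 1; group⟩
      one_smul := fun a => Subtype.ext (by show (1 : G) * a.1 * (1 : G)⁻¹ = a.1; group)
      mul_smul := fun y z a => Subtype.ext (by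
        show ((y : G) * z) * a.1 * ((y : G) * z)⁻¹ = y * (z * a.1 * (z : G)⁻¹) * (y : G)⁻¹
        group) }
  have hcard : Nat.card α = Nat.card P' :=
    Nat.card_congr
      { toFun := fun a => ⟨g⁻¹ * a.1, a.2⟩
        invFun := fun b => ⟨g * b.1, by simp⟩
        left_inv := fun a => by simp
        right_inv := fun b => by simp }
  have hnd : ¬ q ∣ Nat.card α := by
    rw [hcard]
    obtain ⟨n, hn⟩ := IsPGroup.iff_card.1 hP
    rw [hn]
    intro h
    exact hne ((Nat.prime_dvd_prime_iff_eq hq hp).1 (hq.dvd_of_dvd_pow h))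
  obtain ⟨a, ha⟩ := IsPGroup.nonempty_fixed_point_of_prime_not_dvd_card hx α hnd
  refine ⟨a.1, ?_, a.2⟩
  have := ha ⟨x, Subgroup.mem_zpowers x⟩
  have h2 : x * a.1 * x⁻¹ = a.1 := congrArg Subtype.val this
  rw [Subgroup.mem_centralizer_singleton_iff]
  exact (mul_inv_eq_iff_eq_mul.1 h2).symm

theorem Form.exists_C (hF : Form 𝔉) {G : Type u} [Group G] [Finite G] {p : ℕ} (hp : p.Prime)
    {D P : Subgroup G} (hD : D.Normal) (hc : PChain D P) : IsPGroup p P →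
    ∃ (C : Subgroup G) (_ : C.Normal), 𝔉 (G ⧸ C) ∧ ∀ q : ℕ, q.Prime → q ≠ p → ∀ x ∈ C,
      IsPGroup q (Subgroup.zpowers x) → P ≤ (Subgroup.centralizer ({x} : Set G) ⊓ P) ⊔ D := by
  induction hc with
  | refl =>
    intro _
    refine ⟨⊤, inferInstance, hF.hU _ (supersoluble_quot _ Relation.ReflTransGen.refl), ?_⟩
    intros; exact le_sup_right
  | @tail P' P hc h ih =>
    obtain ⟨h1, h2, h3, h4⟩ := h
    intro hP
    obtain ⟨C', hC', hFC', hCC'⟩ := ih (hP.to_le h3)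
    have hn : (P.map (QuotientGroup.mk' P')).Normal :=
      Subgroup.Normal.map inferInstance _ (QuotientGroup.mk'_surjective P')
    have hcard : (Nat.card (P.map (QuotientGroup.mk' P'))).Prime := by
      have := relIndex_comap_mk (N := P') (P.map (QuotientGroup.mk' P'))
      rw [Subgroup.comap_map_eq, QuotientGroup.ker_mk', sup_eq_left.2 h3] at this
      rwa [← this]
    set E := (Subgroup.centralizer ((P.map (QuotientGroup.mk' P') : Subgroup (G ⧸ P')) :
      Set (G ⧸ P'))).comap (QuotientGroup.mk' P') with hE
    have hEn : E.Normal := by rw [hE]; infer_instance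
    have hFE : 𝔉 (G ⧸ E) := by
      refine hF.hU _ (supersoluble_quot _ (pchain_of_abelian _ hEn fun g h => ?_))
      exact comm_mem_centralizer _ hcard (QuotientGroup.mk' P' g) (QuotientGroup.mk' P' h)
    refine ⟨C' ⊓ E, inferInstance, hF.hres _ _ _ hC' hEn hFC' hFE, ?_⟩
    intro q hq hqp x hx hxq g hg
    obtain ⟨a, ha, hga⟩ := exists_fixed (P := P) hp hq hqp h1 (hP.to_le h3) x hxq g (by
      intro y hy
      have hyE : y ∈ E := by
        obtain ⟨m, rfl⟩ := Subgroup.mem_zpowers_iff.1 hy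
        exact E.zpow_mem hx.2 m
      have h5 := Subgroup.mem_centralizer_iff.1 hyE (QuotientGroup.mk' P' g) ⟨g, hg, rfl⟩
      rw [← QuotientGroup.eq]
      rw [← map_mul, ← map_mul] at h5
      have h6 := QuotientGroup.eq.1 h5
      rw [QuotientGroup.eq]
      have := h1.conj_mem _ h6 (y)
      convert this using 1; group)
    have haP : a ∈ P := by
      have := P.mul_mem hg (h3 hga)
      simpa using this
    have h7 : a⁻¹ * g ∈ P' := by
      have := P'.inv_mem hga
      simpa using this
    have h8 := hCC' q hq hqp x hx.1 hxq h7
    have h9 : a ∈ (Subgroup.centralizer ({x} : Set G) ⊓ P) ⊔ D :=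
      Subgroup.mem_sup_left ⟨ha, haP⟩
    have h10 : (Subgroup.centralizer ({x} : Set G) ⊓ P') ⊔ D ≤
      (Subgroup.centralizer ({x} : Set G) ⊓ P) ⊔ D := sup_le_sup_right (inf_le_inf_left _ h3) D
    have := Subgroup.mul_mem _ h9 (h10 h8)
    simpa using this

theorem qn_surj {G G' : Type*} [Group G] [Group G'] (f : G →* G') (hf : Function.Surjective f)
    (h : IsQuasinilpotentGroup G) : IsQuasinilpotentGroup G' := by
  intro A B hc x
  obtain ⟨hA, hB, hlt, hmin⟩ := hc
  have hc' : IsChiefFactor (A.comap f) (B.comap f) := by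
    refine ⟨hA.comap f, hB.comap f, (Subgroup.comap_lt_comap_of_surjective hf).2 hlt, ?_⟩
    intro L hL h1 h2
    have hk : f.ker ≤ L := by
      refine le_trans ?_ h1.le
      rw [← MonoidHom.comap_bot]; exact Subgroup.comap_mono bot_le
    have e : (L.map f).comap f = L := Subgroup.comap_map_eq_self hk
    rw [← e] at h1 h2
    exact hmin (L.map f) (hL.map f hf) ((Subgroup.comap_lt_comap_of_surjective hf).1 h1)
      ((Subgroup.comap_lt_comap_of_surjective hf).1 h2)
  obtain ⟨x, rfl⟩ := hf x
  obtain ⟨y, hy, hyh⟩ := h _ _ hc' x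
  refine ⟨f y, hy, fun h hh => ?_⟩
  obtain ⟨h, rfl⟩ := hf h
  have := hyh h hh
  rw [Subgroup.mem_comap] at this
  simpa using this

theorem chief_le {X : Type*} [Group X] {A A1 J : Subgroup X} (hA : IsChiefFactor A ⊥)
    (h1 : A1 ≤ A) (hne : A1 ≠ ⊥) (hJ : ∀ x : X, ∀ a ∈ A1, x * a * x⁻¹ ∈ J) : A ≤ J := by
  have h2 : Subgroup.normalClosure (A1 : Set X) ≤ A := by
    haveI := hA.1
    exact Subgroup.normalClosure_le_normal h1
  have h3 : A1 ≤ Subgroup.normalClosure (A1 : Set X) := Subgroup.le_normalClosure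
  have h4 : Subgroup.normalClosure (A1 : Set X) = A := by
    rcases eq_or_lt_of_le h2 with h | h
    · exact h
    · exact (hA.2.2.2 _ Subgroup.normalClosure_normal
        (bot_lt_iff_ne_bot.2 fun h => hne (eq_bot_iff.2 (h ▸ h3))) h).elim
  rw [← h4, Subgroup.normalClosure, Subgroup.closure_le]
  intro y hy
  obtain ⟨a, ha, hay⟩ := Group.mem_conjugatesOfSet_iff.1 hy
  obtain ⟨c, hc⟩ := isConj_iff.1 hay
  rw [← hc]; exact hJ c a ha

def Inv {X : Type*} [Group X] (N L : Subgroup X) : Prop := ∀ n ∈ N, ∀ l ∈ L, n * l * n⁻¹ ∈ L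

def MinInv {X : Type*} [Group X] (N A : Subgroup X) : Prop :=
  A ≠ ⊥ ∧ Inv N A ∧ ∀ L : Subgroup X, L ≤ A → L ≠ ⊥ → Inv N L → L = A

theorem exists_minInv {X : Type*} [Group X] [Finite X] {N A : Subgroup X} (hA : A ≠ ⊥)
    (h : Inv N A) : ∃ A1, MinInv N A1 ∧ A1 ≤ A := by
  have hne : {L : Subgroup X | L ≠ ⊥ ∧ Inv N L ∧ L ≤ A}.Nonempty := ⟨A, hA, h, le_rfl⟩
  obtain ⟨L, hL, hmin⟩ := wellFounded_lt.has_min _ hne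
  refine ⟨L, ⟨hL.1, hL.2.1, fun K hK h1 h2 => ?_⟩, hL.2.2⟩
  by_contra hcon
  exact hmin K ⟨h1, h2, hK.trans hL.2.2⟩ (lt_of_le_of_ne hK hcon)

theorem MinInv.conj {X : Type*} [Group X] {N A : Subgroup X} (hN : N.Normal) (h : MinInv N A)
    (x : X) : MinInv N (A.map (MulAut.conj x).toMonoidHom) := by
  have key : ∀ (x : X) (L : Subgroup X), Inv N L → Inv N (L.map (MulAut.conj x).toMonoidHom) := by
    rintro x L hL n hn _ ⟨l, hl, rfl⟩
    refine ⟨x⁻¹ * n * x * l * (x⁻¹ * n * x)⁻¹, hL _ ?_ l hl, ?_⟩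
    · have := hN.conj_mem n hn x⁻¹
      simpa using this
    · simp [MulAut.conj_apply]; group
  have hcc : ∀ (x : X) (L : Subgroup X),
      (L.map (MulAut.conj x⁻¹).toMonoidHom).map (MulAut.conj x).toMonoidHom = L := by
    intro x L
    rw [Subgroup.map_map]
    convert Subgroup.map_id L
    ext y; simp [MulAut.conj_apply]; group
  refine ⟨?_, key x A h.2.1, ?_⟩
  · intro h1
    rw [Subgroup.map_eq_bot_iff_of_injective _ (MulAut.conj x).injective] at h1
    exact h.1 h1
  · intro L hL h1 h2
    have h3 : L.map (MulAut.conj x⁻¹).toMonoidHom = A := by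
      refine h.2.2 _ ?_ ?_ (key _ _ h2)
      · have := Subgroup.map_mono (f := (MulAut.conj x⁻¹).toMonoidHom) hL
        have e := hcc x⁻¹ A
        rw [inv_inv] at e
        rwa [e] at this
      · intro h4
        rw [Subgroup.map_eq_bot_iff_of_injective _ (MulAut.conj x⁻¹).injective] at h4
        exact h1 h4
    rw [← h3, hcc]

theorem MinInv.le_or_commute {X : Type*} [Group X] {N A L : Subgroup X} (h : MinInv N A)
    (hL : Inv N L) (hA : A ≤ N) (hLN : L ≤ N) :
    A ≤ L ∨ ∀ a ∈ A, ∀ l ∈ L, a * l = l * a := by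
  by_cases h1 : A ⊓ L = ⊥
  · right
    intro a ha l hl
    have : a * l * a⁻¹ * l⁻¹ ∈ A ⊓ L := by
      constructor
      · have := A.mul_mem ha (h.2.1 l (hLN hl) _ (A.inv_mem ha))
        show _ ∈ A
        convert this using 1; group
      · exact L.mul_mem (hL a (hA ha) l hl) (L.inv_mem hl)
    rw [h1, Subgroup.mem_bot] at this
    have := mul_inv_eq_one.1 this
    exact mul_inv_eq_iff_eq_mul.1 this
  · left
    have := h.2.2 (A ⊓ L) inf_le_left h1 (fun n hn l hl => ⟨h.2.1 n hn l hl.1, hL n hn l hl.2⟩)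
    exact inf_eq_left.1 this

theorem le_centralizer_singleton {X : Type*} [Group X] {L : Subgroup X} {c : X} :
    L ≤ Subgroup.centralizer {c} ↔ ∀ l ∈ L, c * l = l * c := by
  constructor
  · intro h l hl
    exact (Subgroup.mem_centralizer_singleton_iff.1 (h hl)).symm
  · intro h l hl
    exact Subgroup.mem_centralizer_singleton_iff.2 (h l hl).symm

theorem MinInv.qn {X : Type*} [Group X] {N A : Subgroup X} (h : MinInv N A) (hAN : A ≤ N)
    (hq : IsQuasinilpotentGroup N) {n : X} (hn : n ∈ N) :
    ∃ a ∈ A, ∀ l ∈ A, (a⁻¹ * n) * l = l * (a⁻¹ * n) := by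
  have hc : IsChiefFactor (A.subgroupOf N) ⊥ := by
    refine ⟨⟨fun l hl m => h.2.1 m m.2 l hl⟩, inferInstance, ?_, ?_⟩
    · rw [bot_lt_iff_ne_bot]
      intro h1
      rw [Subgroup.subgroupOf_eq_bot, disjoint_iff, inf_eq_left.2 hAN] at h1
      exact h.1 h1
    · intro L hL h1 h2
      have h3 : L.map N.subtype = A := by
        refine h.2.2 _ ?_ ?_ ?_
        · have := Subgroup.map_mono (f := N.subtype) h2.le
          rwa [Subgroup.subgroupOf_map_subtype, inf_eq_left.2 hAN] at this
        · intro h4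
          rw [Subgroup.map_eq_bot_iff_of_injective _ N.subtype_injective] at h4
          exact h1.ne' h4
        · rintro m hm _ ⟨l, hl, rfl⟩
          exact ⟨⟨m, hm⟩ * l * ⟨m, hm⟩⁻¹, hL.conj_mem l hl _, rfl⟩
      apply h2.ne
      rw [← h3]
      exact (Subgroup.comap_map_eq_self_of_injective N.subtype_injective L).symm
  obtain ⟨y, hy, hyl⟩ := hq _ _ hc ⟨n, hn⟩
  refine ⟨y, hy, fun l hl => ?_⟩
  have := hyl ⟨l, hAN hl⟩ hl
  rw [Subgroup.mem_bot, mul_inv_eq_one] at this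
  have := congrArg Subtype.val this
  simp only [Subgroup.coe_mul, Subgroup.coe_inv] at this
  have h2 : n * l = y * l * (y : X)⁻¹ * n := by rw [← this]; group
  rw [mul_assoc, h2]; group

theorem qn_inner {X : Type*} [Group X] [Finite X] {N A : Subgroup X} (hN : N.Normal)
    (hq : IsQuasinilpotentGroup N) (hA : IsChiefFactor A ⊥) :
    N ≤ A ⊔ Subgroup.centralizer (A : Set X) := by
  by_cases h0 : A ≤ N
  swap
  · have hAn := hA.1
    have h1 : A ⊓ N = ⊥ := by
      by_contra hcon
      exact hA.2.2.2 (A ⊓ N) (Subgroup.normal_inf_normal A N) (bot_lt_iff_ne_bot.2 hcon)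
        (lt_of_le_of_ne inf_le_left fun h => h0 (inf_eq_left.1 h))
    refine le_trans ?_ le_sup_right
    intro n hn
    rw [Subgroup.mem_centralizer_iff]
    intro a ha
    exact Subgroup.commute_of_normal_of_disjoint A N hAn hN (disjoint_iff.2 h1) a n ha hn
  have hAi : Inv N A := fun n _ a ha => hA.1.conj_mem a ha n
  obtain ⟨A1, hA1, hA1A⟩ := exists_minInv hA.2.2.1.ne' hAi
  let good : Set (Subgroup X) := {L | L ≤ A ∧ Inv N L ∧
    ∀ n ∈ N, ∃ l ∈ L, L ≤ Subgroup.centralizer {l⁻¹ * n}}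
  have hgne : good.Nonempty := ⟨⊥, bot_le, fun n _ l hl => by
    rw [Subgroup.mem_bot] at hl ⊢; rw [hl]; group, fun n _ => ⟨1, one_mem _, bot_le⟩⟩
  obtain ⟨L, hL⟩ := (Set.toFinite good).exists_maximal hgne
  obtain ⟨hLA, hLi, hLg⟩ := hL.1
  have hall : A ≤ L := by
    refine chief_le hA hA1A hA1.1 fun x a ha => ?_
    have hm := hA1.conj hN x
    set A' := A1.map (MulAut.conj x).toMonoidHom with hA'
    have hA'A : A' ≤ A := by
      rintro _ ⟨b, hb, rfl⟩
      exact hA.1.conj_mem b (hA1A hb) x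
    have hsuff : A' ≤ L := by
      rcases hm.le_or_commute hLi (hA'A.trans h0) (hLA.trans h0) with h | hcomm
      · exact h
      · refine le_sup_right.trans (hL.2 (y := L ⊔ A') ⟨sup_le hLA hA'A, ?_, ?_⟩ le_sup_left)
        · intro n hn l hl
          have : L ⊔ A' ≤ (L ⊔ A').comap (MulAut.conj n).toMonoidHom := by
            refine sup_le (fun l hl => ?_) (fun l hl => ?_)
            · exact Subgroup.mem_sup_left (hLi n hn l hl)
            · exact Subgroup.mem_sup_right (hm.2.1 n hn l hl)
          exact this hl
        · intro n hn
          obtain ⟨l, hl, hlc⟩ := hLg n hn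
          obtain ⟨b, hb, hbc⟩ := hm.qn (hA'A.trans h0) hq
            (n := l⁻¹ * n) (N.mul_mem (N.inv_mem (h0 (hLA hl))) hn)
          refine ⟨l * b, Subgroup.mul_mem_sup hl hb, ?_⟩
          have e : (l * b)⁻¹ * n = b⁻¹ * (l⁻¹ * n) := by group
          rw [e]
          refine sup_le ?_ (le_centralizer_singleton.2 hbc)
          rw [le_centralizer_singleton] at hlc ⊢
          intro k hk
          have h5 : b⁻¹ * k = k * b⁻¹ := hcomm _ (A'.inv_mem hb) k hk
          rw [mul_assoc, hlc k hk, ← mul_assoc, h5, mul_assoc]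
    exact hsuff ⟨a, ha, rfl⟩
  intro n hn
  obtain ⟨l, hl, hlc⟩ := hLg n hn
  have h6 : l⁻¹ * n ∈ Subgroup.centralizer (A : Set X) := by
    rw [Subgroup.mem_centralizer_iff]
    intro a ha
    exact ((le_centralizer_singleton.1 hlc) a (hall ha)).symm
  have := Subgroup.mul_mem_sup (hLA hl) h6
  simpa using this

/-- `L * C(L)` as a subgroup. -/
def LC {X : Type*} [Group X] (L : Subgroup X) : Subgroup X where
  carrier := {d | ∃ l ∈ L, ∀ h ∈ L, (l⁻¹ * d) * h = h * (l⁻¹ * d)}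
  one_mem' := ⟨1, one_mem _, by simp⟩
  mul_mem' := by
    rintro d e ⟨l, hl, hd⟩ ⟨m, hm, he⟩
    refine ⟨l * m, L.mul_mem hl hm, fun h hh => ?_⟩
    have e1 : (l * m)⁻¹ * (d * e) = (l⁻¹ * d) * (m⁻¹ * e) := by
      have := hd m⁻¹ (L.inv_mem hm)
      calc (l * m)⁻¹ * (d * e) = m⁻¹ * (l⁻¹ * d) * e := by group
        _ = _ := by rw [← this]; group
    rw [e1, mul_assoc, he h hh, ← mul_assoc, hd h hh, mul_assoc]
  inv_mem' := by
    rintro d ⟨l, hl, hd⟩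
    refine ⟨l⁻¹, L.inv_mem hl, fun h hh => ?_⟩
    have e1 : (l⁻¹)⁻¹ * d⁻¹ = (l⁻¹ * d)⁻¹ := by
      have := hd l hl
      have h2 : d = l * (l⁻¹ * d) := by group
      calc (l⁻¹)⁻¹ * d⁻¹ = l * d⁻¹ := by group
        _ = l * (l * (l⁻¹ * d))⁻¹ := by rw [← h2]
        _ = _ := by rw [← this]; group
    rw [e1]
    have := hd h hh
    exact (Commute.inv_left (show Commute (l⁻¹ * d) h from this))

theorem chief_LC {X : Type*} [Group X] [Finite X] {D L : Subgroup X} (hD : IsChiefFactor D ⊥)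
    (hL : L ≤ D) (hi : Inv D L) : D ≤ LC L := by
  have hDi : Inv D D := fun n hn a ha => hD.1.conj_mem a ha n
  obtain ⟨D1, hD1, hD1D⟩ := exists_minInv hD.2.2.1.ne' hDi
  refine chief_le hD hD1D hD1.1 fun x a ha => ?_
  have hm := hD1.conj hD.1 x
  have hle : D1.map (MulAut.conj x).toMonoidHom ≤ D := by
    rintro _ ⟨b, hb, rfl⟩
    exact hD.1.conj_mem b (hD1D hb) x
  have hmem : x * a * x⁻¹ ∈ D1.map (MulAut.conj x).toMonoidHom := ⟨a, ha, rfl⟩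
  rcases hm.le_or_commute hi hle hL with h | h
  · exact ⟨x * a * x⁻¹, h hmem, fun k _ => by rw [inv_mul_cancel]; simp⟩
  · exact ⟨1, one_mem _, fun k hk => by simpa using h _ hmem k hk⟩

def Inn {X : Type*} [Group X] (E : Subgroup X) : Prop :=
  ∀ (A B : Subgroup X) [B.Normal], IsChiefFactor A B → E.map (QuotientGroup.mk' B) ≤
    A.map (QuotientGroup.mk' B) ⊔ Subgroup.centralizer (A.map (QuotientGroup.mk' B) : Set (X ⧸ B))

theorem chief_map {X : Type*} [Group X] {A B : Subgroup X} [B.Normal] (h : IsChiefFactor A B) :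
    IsChiefFactor (A.map (QuotientGroup.mk' B)) ⊥ := by
  have hs := QuotientGroup.mk'_surjective B
  obtain ⟨hA, hB, hlt, hmin⟩ := h
  have hAe : (A.map (QuotientGroup.mk' B)).comap (QuotientGroup.mk' B) = A :=
    Subgroup.comap_map_eq_self (by rw [QuotientGroup.ker_mk']; exact hlt.le)
  have hBe : (⊥ : Subgroup (X ⧸ B)).comap (QuotientGroup.mk' B) = B := by
    rw [MonoidHom.comap_bot, QuotientGroup.ker_mk']
  refine ⟨hA.map _ hs, inferInstance, ?_, ?_⟩
  · rw [← Subgroup.comap_lt_comap_of_surjective hs, hAe, hBe]; exact hlt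
  · intro L hL h1 h2
    rw [← Subgroup.comap_lt_comap_of_surjective hs, hBe] at h1
    rw [← Subgroup.comap_lt_comap_of_surjective hs, hAe] at h2
    exact hmin _ (hL.comap _) h1 h2

theorem inn_gf {X : Type*} [Group X] [Finite X] : Inn (generalizedFitting X) := by
  intro A B _ hc
  rw [Subgroup.map_le_iff_le_comap]
  refine sSup_le ?_
  rintro N ⟨hN, hq⟩
  rw [← Subgroup.map_le_iff_le_comap]
  refine qn_inner (hN.map _ (QuotientGroup.mk'_surjective B)) ?_ (chief_map hc)
  exact qn_surj ((QuotientGroup.mk' B).subgroupMap N) (MonoidHom.subgroupMap_surjective _ _) hq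

theorem gf_normal {X : Type*} [Group X] : (generalizedFitting X).Normal := by
  rw [← Subgroup.normalizer_eq_top_iff, eq_top_iff]
  intro g _
  have key : ∀ g : X, generalizedFitting X ≤ (generalizedFitting X).comap (MulAut.conj g).toMonoidHom := by
    intro g
    refine sSup_le ?_
    rintro N ⟨hN, hq⟩ n hn
    exact (le_sSup (show N ∈ {N : Subgroup X | N.Normal ∧ IsQuasinilpotentGroup N} from ⟨hN, hq⟩) :
      N ≤ generalizedFitting X) (hN.conj_mem n hn g)
  rw [Subgroup.mem_normalizer_iff]
  intro h
  refine ⟨fun hh => key g hh, fun hh => ?_⟩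
  have := key g⁻¹ hh
  simp only [Subgroup.mem_comap] at this
  convert this using 1
  simp [mul_assoc]

/-- chief factor below a solvable Inn group is centralized -/
theorem comm_le {X : Type*} [Group X] [Finite X] {E : Subgroup X} (hE : Inn E) {A B : Subgroup X}
    (hc : IsChiefFactor A B) (hA : Group.IsSolvable A) : ⁅A, E⁆ ≤ B := by
  haveI := hc.2.1
  have hs := QuotientGroup.mk'_surjective B
  have h1 := hE A B hc
  have h2 := chief_map hc
  set A' := A.map (QuotientGroup.mk' B) with hA'
  haveI := h2.1
  have hsol : Group.IsSolvable A' :=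
    Group.isSolvable_of_surjective (MonoidHom.subgroupMap_surjective (QuotientGroup.mk' B) A)
  have hcomm : ⁅A', A'⁆ = ⊥ := by
    by_contra hne
    have hle : ⁅A', A'⁆ ≤ A' := Subgroup.commutator_le_right _ _
    rcases eq_or_lt_of_le hle with h | h
    · haveI : Nontrivial A' := (Subgroup.nontrivial_iff_ne_bot A').2 h2.2.2.1.ne'
      have h3 := Group.IsSolvable.commutator_lt_top_of_nontrivial A'
      apply h3.ne
      apply Subgroup.map_injective A'.subtype_injective
      rw [_root_.commutator, Subgroup.map_commutator, ← MonoidHom.range_eq_map, Subgroup.range_subtype, h]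
    · exact h2.2.2.2 _ (Subgroup.commutator_normal A' A') (bot_lt_iff_ne_bot.2 hne) h
  have h3 : A' ≤ Subgroup.centralizer (A' : Set (X ⧸ B)) := by
    rw [← Subgroup.commutator_eq_bot_iff_le_centralizer]; exact hcomm
  rw [sup_eq_right.2 h3] at h1
  have h4 : ⁅A', E.map (QuotientGroup.mk' B)⁆ = ⊥ := by
    rw [Subgroup.commutator_comm, Subgroup.commutator_eq_bot_iff_le_centralizer]; exact h1
  rw [hA', ← Subgroup.map_commutator, Subgroup.map_eq_bot_iff, QuotientGroup.ker_mk'] at h4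
  exact h4

theorem nilp_of_inn {X : Type*} [Group X] [Finite X] {E : Subgroup X} (hn : E.Normal) (hE : Inn E)
    (hs : Group.IsSolvable E) : Group.IsNilpotent E := by
  have key : ∀ B : Subgroup X, B.Normal → B ≤ E → ∃ n, E.lowerCentralSeries n ≤ B := by
    intro B
    induction B using WellFoundedGT.induction with
    | ind B ih =>
    intro hB hBE
    rcases eq_or_lt_of_le hBE with h | h
    · exact ⟨0, h.ge⟩
    · obtain ⟨A, hc, hAE⟩ := exists_chief hB hn h
      obtain ⟨n, hn'⟩ := ih A hc.2.2.1 hc.1 hAE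
      have hA : Group.IsSolvable A :=
        Group.isSolvable_of_isSolvable_injective (Subgroup.inclusion_injective hAE)
      refine ⟨n + 1, ?_⟩
      rw [Subgroup.lowerCentralSeries_succ]
      exact (Subgroup.commutator_mono hn' le_rfl).trans (comm_le hE hc hA)
  obtain ⟨n, h⟩ := key ⊥ inferInstance bot_le
  exact Subgroup.isNilpotent_iff_lowerCentralSeries E |>.2 ⟨n, le_bot_iff.1 h⟩

theorem solvable_ext {X : Type*} [Group X] {A B : Subgroup X} [B.Normal] (hBA : B ≤ A)
    (hB : Group.IsSolvable B) (hA : Group.IsSolvable (A.map (QuotientGroup.mk' B))) :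
    Group.IsSolvable A := by
  refine Group.isSolvable_of_ker_le_range (Subgroup.inclusion hBA)
    ((QuotientGroup.mk' B).subgroupMap A) ?_
  intro a ha
  have h1 : QuotientGroup.mk' B (a : X) = 1 := by
    have := congrArg Subtype.val (MonoidHom.mem_ker.1 ha)
    simpa using this
  have h2 : (a : X) ∈ B := by simpa using h1
  exact ⟨⟨a, h2⟩, rfl⟩

theorem exists_simple {X : Type*} [Group X] [Finite X] {E : Subgroup X} (hn : E.Normal) (hE : Inn E)
    (hs : ¬ Group.IsSolvable E) : ∃ (Y : Subgroup E) (_ : Y.Normal), IsSimpleGroup (E ⧸ Y) ∧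
      ¬ ∀ a b : E ⧸ Y, a * b = b * a := by
  obtain ⟨B, ⟨hB, hBE, hBs⟩, hmax⟩ := wellFounded_gt.has_min
    {B : Subgroup X | B.Normal ∧ B ≤ E ∧ Group.IsSolvable B} ⟨⊥, inferInstance, bot_le, inferInstance⟩
  have hlt : B < E := lt_of_le_of_ne hBE (by rintro rfl; exact hs hBs)
  obtain ⟨A, hc, hAE⟩ := exists_chief hB hn hlt
  have h1 := hE A B hc
  have h2 := chief_map hc
  set π := QuotientGroup.mk' B with hπ
  have hAs : ¬ Group.IsSolvable (A.map π) := fun h =>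
    hmax A ⟨hc.1, hAE, solvable_ext hc.2.2.1.le hBs h⟩ hc.2.2.1
  haveI := h2.1
  have hnc : ¬ A.map π ≤ Subgroup.centralizer (A.map π : Set (X ⧸ B)) := by
    intro h
    apply hAs
    apply Group.isSolvable_of_comm
    intro a b
    exact Subtype.ext ((Subgroup.mem_centralizer_iff.1 (h b.2)) a a.2)
  have hcomm : ⁅A.map π, A.map π⁆ = A.map π := by
    by_contra hne
    have hle : ⁅A.map π, A.map π⁆ < A.map π :=
      lt_of_le_of_ne (Subgroup.commutator_le_right _ _) hne
    refine h2.2.2.2 _ (Subgroup.commutator_normal _ _) (bot_lt_iff_ne_bot.2 fun h0 => hnc ?_) hle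
    rwa [← Subgroup.commutator_eq_bot_iff_le_centralizer]
  set C := Subgroup.centralizer (A.map π : Set (X ⧸ B)) with hC
  haveI hCn : C.Normal := by rw [hC]; infer_instance
  set W := (C.comap π).subgroupOf E with hW
  haveI hWn : W.Normal := by rw [hW]; infer_instance
  have hWtop : W ≠ ⊤ := by
    intro h
    rw [hW, Subgroup.subgroupOf_eq_top] at h
    exact hnc (Subgroup.map_le_iff_le_comap.2 (hAE.trans h))
  obtain ⟨Y, ⟨hYn, hWY, hYt⟩, hYmax⟩ := wellFounded_gt.has_min
    {Y : Subgroup E | Y.Normal ∧ W ≤ Y ∧ Y ≠ ⊤} ⟨W, hWn, le_rfl, hWtop⟩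
  refine ⟨Y, hYn, ?_, ?_⟩
  · haveI : Nontrivial (E ⧸ Y) := QuotientGroup.nontrivial_iff.2 hYt
    refine ⟨fun L hL => ?_⟩
    have hYL : Y ≤ L.comap (QuotientGroup.mk' Y) := by
      conv_lhs => rw [← QuotientGroup.ker_mk' Y, ← MonoidHom.comap_bot]
      exact Subgroup.comap_mono bot_le
    by_cases hL' : L.comap (QuotientGroup.mk' Y) = ⊤
    · right
      rw [← Subgroup.map_comap_eq_self_of_surjective (QuotientGroup.mk'_surjective Y) L, hL',
        Subgroup.map_top_of_surjective _ (QuotientGroup.mk'_surjective Y)]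
    · left
      have : ¬ Y < L.comap (QuotientGroup.mk' Y) := hYmax _ ⟨hL.comap _, hWY.trans hYL, hL'⟩
      have h3 : Y = L.comap (QuotientGroup.mk' Y) := hYL.eq_of_not_lt this
      rw [← Subgroup.map_comap_eq_self_of_surjective (QuotientGroup.mk'_surjective Y) L, ← h3]
      rw [Subgroup.map_eq_bot_iff, QuotientGroup.ker_mk']
  · intro hab
    apply hYt
    have h3 : commutator E ≤ Y := by
      rw [_root_.commutator, Subgroup.commutator_le]
      intro a _ b _
      rw [← QuotientGroup.eq_one_iff]
      have := hab (a : E ⧸ Y) (b : E ⧸ Y)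
      rw [commutatorElement_def]
      show (a : E ⧸ Y) * (b : E ⧸ Y) * (a : E ⧸ Y)⁻¹ * (b : E ⧸ Y)⁻¹ = 1
      rw [this]; group
    have h4 : A ≤ Y.map E.subtype := by
      have h5 : A ≤ ⁅A, A⁆ ⊔ B := by
        intro a ha
        have : π a ∈ ⁅A.map π, A.map π⁆ := by rw [hcomm]; exact ⟨a, ha, rfl⟩
        rw [← Subgroup.map_commutator] at this
        obtain ⟨b, hb, hba⟩ := this
        have h6 : b⁻¹ * a ∈ B := QuotientGroup.eq.1 hba
        have := Subgroup.mul_mem_sup hb h6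
        simpa using this
      refine h5.trans (sup_le ?_ ?_)
      · refine (Subgroup.commutator_mono hAE hAE).trans ?_
        have : (commutator E).map E.subtype = ⁅E, E⁆ := by
          rw [_root_.commutator, Subgroup.map_commutator, ← MonoidHom.range_eq_map, Subgroup.range_subtype]
        rw [← this]
        exact Subgroup.map_mono h3
      · intro b hb
        refine ⟨⟨b, hBE hb⟩, hWY ?_, rfl⟩
        rw [hW, Subgroup.mem_subgroupOf, Subgroup.mem_comap]
        have : π b = 1 := (QuotientGroup.eq_one_iff b).2 hb
        show π b ∈ C
        rw [this]; exact one_mem _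
    rw [eq_top_iff]
    rintro ⟨e, he⟩ _
    have h5 : π e ∈ A.map π ⊔ C := h1 ⟨e, he, rfl⟩
    rw [Subgroup.mem_sup_of_normal_right] at h5
    obtain ⟨y, ⟨a, ha, rfl⟩, c, hcC, hac⟩ := h5
    obtain ⟨y, hy, hya⟩ := h4 ha
    have h6 : a⁻¹ * e ∈ C.comap π := by
      show π (a⁻¹ * e) ∈ C
      rw [map_mul, ← hac, map_inv]; simpa using hcC
    have h7 : y⁻¹ * ⟨e, he⟩ ∈ W := by
      rw [hW, Subgroup.mem_subgroupOf]
      show (y : X)⁻¹ * e ∈ _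
      rw [show (y : X) = a from hya]; exact h6
    have := mul_mem hy (hWY h7)
    simpa using this

theorem gf_cent {X : Type*} [Group X] [Finite X] :
    Subgroup.centralizer (generalizedFitting X : Set X) ≤ generalizedFitting X := by
  set F := generalizedFitting X with hF
  haveI hFn : F.Normal := gf_normal
  set C := Subgroup.centralizer (F : Set X) with hC
  haveI hCn : C.Normal := by rw [hC]; infer_instance
  by_contra hle
  have hZn : (C ⊓ F).Normal := inferInstance
  set Z := C ⊓ F with hZ
  have hlt : Z < C := lt_of_le_of_ne inf_le_left (fun h => hle (by rw [← h]; exact inf_le_right))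
  obtain ⟨D, hc, hDC⟩ := exists_chief hZn hCn hlt
  have hq : IsQuasinilpotentGroup D := by
    intro A B hAB x
    obtain ⟨hA, hB, hBA, hmin⟩ := hAB
    have hcen : ∀ z : D, (z : X) ∈ Z → ∀ d : D, d * z = z * d := by
      intro z hz d
      apply Subtype.ext
      exact ((Subgroup.mem_centralizer_iff.1 (hDC d.2)) z hz.2).symm
    haveI hZd : (Z.subgroupOf D).Normal := inferInstance
    have hm : (A ⊓ Z.subgroupOf D) ⊔ B = B ∨ (A ⊓ Z.subgroupOf D) ⊔ B = A := by
      by_contra! h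
      exact hmin ((A ⊓ Z.subgroupOf D) ⊔ B) inferInstance
        (lt_of_le_of_ne le_sup_right h.1.symm) (lt_of_le_of_ne (sup_le inf_le_left hBA.le) h.2)
    rcases hm with hm | hm
    · have hZB : A ⊓ Z.subgroupOf D ≤ B := by rw [← hm]; exact le_sup_left
      have hD' := chief_map hc
      set π := QuotientGroup.mk' Z with hπ
      have := chief_LC (L := (A.map D.subtype).map π) hD'
        (Subgroup.map_mono (Subgroup.map_subtype_le A)) (by
          rintro _ ⟨n, hn, rfl⟩ _ ⟨_, ⟨a, ha, rfl⟩, rfl⟩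
          exact ⟨n * a * n⁻¹, ⟨⟨n, hn⟩ * a * ⟨n, hn⟩⁻¹, hA.conj_mem a ha ⟨n, hn⟩, rfl⟩, by simp⟩)
      obtain ⟨_, ⟨_, ⟨a, ha, rfl⟩, rfl⟩, hl⟩ := this ⟨x, x.2, rfl⟩
      refine ⟨a, ha, fun h hh => ?_⟩
      have h1 := hl _ ⟨_, ⟨h, hh, rfl⟩, rfl⟩
      have h2 : π ((a : X)⁻¹ * x * h) = π (h * (a⁻¹ * x)) := by simpa [mul_assoc] using h1
      have h3 : a⁻¹ * (x * h * x⁻¹) * a * h⁻¹ ∈ B := by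
        apply hZB
        refine ⟨?_, ?_⟩
        · show _ ∈ A
          exact mul_mem (mul_mem (mul_mem (inv_mem ha) (hA.conj_mem h hh x)) ha) (inv_mem hh)
        · show _ ∈ Z.subgroupOf D
          rw [Subgroup.mem_subgroupOf]
          have h4 := QuotientGroup.eq.1 h2.symm
          have h5 := hZn.conj_mem _ h4 (h * ((a : X)⁻¹ * x))
          convert h5 using 1
          push_cast
          group
      have := hB.conj_mem _ h3 a
      convert this using 1
      group
    · refine ⟨1, one_mem _, fun h hh => ?_⟩
      have hh' := hh
      rw [← hm, Subgroup.mem_sup_of_normal_right] at hh'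
      obtain ⟨z, hz, b, hb, rfl⟩ := hh'
      have h1 := hcen z hz.2
      have h2 : x * (z * b) * x⁻¹ * (1 * (z * b) * 1⁻¹)⁻¹ = z * ((x * b * x⁻¹) * b⁻¹) * z⁻¹ := by
        rw [← mul_assoc x z b, h1 x]; group
      rw [h2]
      exact hB.conj_mem _ (mul_mem (hB.conj_mem b hb x) (inv_mem hb)) z
  have hDF : D ≤ F := le_sSup (show D ∈ {N : Subgroup X | N.Normal ∧ IsQuasinilpotentGroup N} from ⟨hc.1, hq⟩)
  exact hc.2.2.1.not_ge (le_inf hDC hDF)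

theorem qn_of_nilp {X : Type*} [Group X] (h : Group.IsNilpotent X) : IsQuasinilpotentGroup X := by
  intro A B hc x
  refine ⟨1, one_mem _, fun a ha => ?_⟩
  haveI := hc.2.1
  have h2 := chief_map hc
  have : ⁅A.map (QuotientGroup.mk' B), (⊤ : Subgroup (X ⧸ B))⁆ = ⊥ := by
    haveI := h2.1
    by_contra hne
    have hle : ⁅A.map (QuotientGroup.mk' B), (⊤ : Subgroup (X ⧸ B))⁆ ≤ A.map (QuotientGroup.mk' B) :=
      Subgroup.commutator_le_left _ _
    rcases eq_or_lt_of_le hle with h | h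
    · have h3 : ∀ n, A.map (QuotientGroup.mk' B) ≤ (⊤ : Subgroup (X ⧸ B)).lowerCentralSeries n := by
        intro n
        induction n with
        | zero => exact le_top
        | succ n ih => 
          rw [Subgroup.lowerCentralSeries_succ, ← h]
          exact Subgroup.commutator_mono ih le_rfl
      obtain ⟨n, hn⟩ := nilpotent_iff_lowerCentralSeries.1 (inferInstance : Group.IsNilpotent (X ⧸ B))
      exact h2.2.2.1.not_ge (hn ▸ h3 n)
    · exact h2.2.2.2 _ (Subgroup.commutator_normal _ _) (bot_lt_iff_ne_bot.2 hne) h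
  rw [← Subgroup.map_top_of_surjective _ (QuotientGroup.mk'_surjective B),
    ← Subgroup.map_commutator, Subgroup.map_eq_bot_iff, QuotientGroup.ker_mk'] at this
  have h3 : a * x * a⁻¹ * x⁻¹ ∈ B := this (Subgroup.commutator_mem_commutator ha (Subgroup.mem_top x))
  have := inv_mem h3
  convert this using 1
  group

theorem gf_char {X : Type*} [Group X] (e : X ≃* X) :
    generalizedFitting X ≤ (generalizedFitting X).comap e.toMonoidHom := by
  refine sSup_le ?_
  rintro N ⟨hN, hq⟩
  rw [← Subgroup.map_le_iff_le_comap]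
  exact le_sSup ⟨hN.map _ e.surjective, 
    qn_surj (e.toMonoidHom.subgroupMap N) (MonoidHom.subgroupMap_surjective _ _) hq⟩

section
variable {G : Type*} [Group G] [Finite G] {H : Subgroup G}

theorem FS_le : FStarIn H ≤ H := Subgroup.map_subtype_le _

theorem FS_normal (hH : H.Normal) : (FStarIn H).Normal := by
  constructor
  rintro _ ⟨n, hn, rfl⟩ g
  exact ⟨MulAut.conjNormal g n, gf_char (MulAut.conjNormal g) hn, by simp⟩

theorem FS_nilp (hs : Group.IsSolvable (FStarIn H)) : Group.IsNilpotent (FStarIn H) := by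
  let e := (generalizedFitting H).equivMapOfInjective H.subtype H.subtype_injective
  haveI : Group.IsSolvable ((generalizedFitting H).map H.subtype) := hs
  have h1 : Group.IsSolvable (generalizedFitting H) :=
    Group.isSolvable_of_isSolvable_injective (f := e.toMonoidHom) e.injective
  have h2 := nilp_of_inn gf_normal inn_gf h1
  exact Group.nilpotent_of_mulEquiv e

theorem FS_simple {G : Type u} [Group G] [Finite G] {H : Subgroup G} (hs : ¬ Group.IsSolvable (FStarIn H)) :
    ∃ (S : Type u) (_ : Group S) (φ : FStarIn H →* S), Function.Surjective φ ∧ IsSimpleGroup S ∧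
      ¬ ∀ a b : S, a * b = b * a := by
  let e := (generalizedFitting H).equivMapOfInjective H.subtype H.subtype_injective
  have h1 : ¬ Group.IsSolvable (generalizedFitting H) := fun h => hs
    (Group.isSolvable_of_isSolvable_injective (f := e.symm.toMonoidHom) e.symm.injective)
  obtain ⟨Y, hY, h2, h3⟩ := exists_simple gf_normal inn_gf h1
  exact ⟨_ ⧸ Y, inferInstance, (QuotientGroup.mk' Y).comp e.symm.toMonoidHom,
    (QuotientGroup.mk'_surjective Y).comp e.symm.surjective, h2, h3⟩

theorem FS_cent {x : G} (hx : x ∈ H) (h : ∀ f ∈ FStarIn H, x * f = f * x) : x ∈ FStarIn H := by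
  refine ⟨⟨x, hx⟩, gf_cent ?_, rfl⟩
  show _ ∈ Subgroup.centralizer _
  rw [Subgroup.mem_centralizer_iff]
  intro f hf
  exact Subtype.ext (h f ⟨f, hf, rfl⟩).symm

theorem FS_nil_le {K : Subgroup G} (hK : K.Normal) (hKH : K ≤ H) (hn : Group.IsNilpotent K) :
    K ≤ FStarIn H := by
  have h1 : Group.IsNilpotent (K.subgroupOf H) :=
    Group.nilpotent_of_mulEquiv (Subgroup.subgroupOfEquivOfLe hKH).symm
  have h2 : K.subgroupOf H ≤ generalizedFitting H := le_sSup ⟨inferInstance, qn_of_nilp h1⟩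
  have := Subgroup.map_mono (f := H.subtype) h2
  rwa [Subgroup.map_subgroupOf_eq_of_le hKH] at this
end

section gen
variable {G : Type*} [Group G]

theorem relIndex_of_mul {K M R : Subgroup G} (hM : M ≤ R)
    (h : ∀ r ∈ R, ∃ m ∈ M, ∃ k ∈ K, r = m * k) : K.relIndex R = K.relIndex M := by
  symm
  refine Nat.card_eq_of_bijective (Subgroup.quotientSubgroupOfEmbeddingOfLE K hM)
    ⟨(Subgroup.quotientSubgroupOfEmbeddingOfLE K hM).injective, ?_⟩
  intro r
  induction r using QuotientGroup.induction_on with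
  | H r =>
    obtain ⟨m, hm, k, hk, e⟩ := h r r.2
    refine ⟨QuotientGroup.mk ⟨m, hm⟩, ?_⟩
    rw [Subgroup.quotientSubgroupOfEmbeddingOfLE_apply_mk]
    rw [QuotientGroup.eq, Subgroup.mem_subgroupOf]
    show m⁻¹ * r ∈ K
    rw [e]; simpa using hk

theorem mem_sup_of_perm {A B : Subgroup G} (h : (A : Set G) * (B : Set G) = (B : Set G) * (A : Set G))
    {x : G} (hx : x ∈ A ⊔ B) : ∃ a ∈ A, ∃ b ∈ B, x = a * b := by
  have h1 : ∀ b ∈ B, ∀ a ∈ A, ∃ a' ∈ A, ∃ b' ∈ B, b * a = a' * b' := by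
    intro b hb a ha
    have : b * a ∈ (A : Set G) * (B : Set G) := by rw [h]; exact Set.mul_mem_mul hb ha
    obtain ⟨a', ha', b', hb', e⟩ := this
    exact ⟨a', ha', b', hb', e.symm⟩
  let L : Subgroup G :=
    { carrier := {x | ∃ a ∈ A, ∃ b ∈ B, x = a * b}
      one_mem' := ⟨1, one_mem _, 1, one_mem _, by simp⟩
      mul_mem' := by
        rintro _ _ ⟨a, ha, b, hb, rfl⟩ ⟨c, hc, d, hd, rfl⟩
        obtain ⟨a', ha', b', hb', e⟩ := h1 b hb c hc
        refine ⟨a * a', mul_mem ha ha', b' * d, mul_mem hb' hd, ?_⟩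
        calc a * b * (c * d) = a * (b * c) * d := by group
          _ = _ := by rw [e]; group
      inv_mem' := by
        rintro _ ⟨a, ha, b, hb, rfl⟩
        obtain ⟨a', ha', b', hb', e⟩ := h1 b⁻¹ (inv_mem hb) a⁻¹ (inv_mem ha)
        exact ⟨a', ha', b', hb', by rw [← e]; group⟩ }
  have h2 : A ⊔ B ≤ L := sup_le (fun a ha => ⟨a, ha, 1, one_mem _, by simp⟩)
    (fun b hb => ⟨1, one_mem _, b, hb, by simp⟩)
  exact h2 hx

variable [Finite G]

theorem eq_one_of_pgroup_dvd {p n : ℕ} (hp : p.Prime) {M : Subgroup G} (hM : IsPGroup p M)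
    (h1 : n ∣ Nat.card M) (h2 : ¬ p ∣ n) : n = 1 := by
  haveI := Fact.mk hp
  obtain ⟨k, hk⟩ := IsPGroup.iff_card.1 hM
  rw [hk] at h1
  obtain ⟨j, _, hj⟩ := (Nat.dvd_prime_pow hp).1 h1
  rcases j with _ | j
  · simpa using hj
  · exact absurd (hj ▸ dvd_pow_self p (Nat.succ_ne_zero j)) h2

theorem sperm_le {p : ℕ} (hp : p.Prime) {M T : Subgroup G} (hM : IsPGroup p M) (hT : T.Normal)
    (hs : SPermutable (M ⊔ T)) {Q : Subgroup G} (hQ : IsSylowIn p Q ⊤) : M ≤ T ⊔ Q := by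
  have hQi : ¬ p ∣ Q.index := by
    have := hQ.2.2
    rwa [← Subgroup.relIndex, Subgroup.relIndex_top_right] at this
  have h1 := hs p hp Q hQ
  have h2 : (T ⊔ Q).relIndex (M ⊔ T ⊔ Q) = (T ⊔ Q).relIndex M := by
    refine relIndex_of_mul (le_sup_left.trans le_sup_left) ?_
    intro r hr
    obtain ⟨a, ha, b, hb, rfl⟩ := mem_sup_of_perm h1 hr
    rw [Subgroup.mem_sup_of_normal_right] at ha
    obtain ⟨m, hm, t, ht, rfl⟩ := ha
    exact ⟨m, hm, t * b, Subgroup.mul_mem_sup ht hb, by group⟩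
  have h3 : (T ⊔ Q).relIndex M = 1 := by
    refine eq_one_of_pgroup_dvd hp hM (Subgroup.relIndex_dvd_card _ _) ?_
    intro hd
    rw [← h2] at hd
    refine hQi (hd.trans ?_)
    refine (Dvd.intro _ (Subgroup.relIndex_mul_index ?_)).trans
      (Subgroup.index_dvd_of_le (le_sup_right : Q ≤ T ⊔ Q))
    exact sup_le_sup_right le_sup_right _
  exact Subgroup.relIndex_eq_one.1 h3

theorem sylowIn_conj {p : ℕ} {Q : Subgroup G} (hQ : IsSylowIn p Q ⊤) (g : G) :
    IsSylowIn p (Q.map (MulAut.conj g).toMonoidHom) ⊤ := by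
  refine ⟨le_top, hQ.2.1.map _, ?_⟩
  have := hQ.2.2
  rw [← Subgroup.relIndex, Subgroup.relIndex_top_right] at this ⊢
  intro h
  exact this (h.trans (Subgroup.index_map_dvd Q (MulAut.conj g).surjective))

theorem sperm_core {p : ℕ} (hp : p.Prime) {M T : Subgroup G} (hM : IsPGroup p M) (hT : T.Normal)
    (hs : SPermutable (M ⊔ T)) {Q : Subgroup G} (hQ : IsSylowIn p Q ⊤) : M ≤ (T ⊔ Q).normalCore := by
  intro m hm g
  have := sperm_le hp hM hT hs (sylowIn_conj hQ g⁻¹) hm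
  rw [Subgroup.mem_sup_of_normal_left] at this
  obtain ⟨t, ht, _, ⟨q, hq, rfl⟩, rfl⟩ := this
  have h3 := Subgroup.mul_mem_sup (hT.conj_mem t ht g) hq
  convert h3 using 1
  simp; group

theorem exists_sylowIn (p : ℕ) (hp : p.Prime) (E : Subgroup G) : ∃ P, IsSylowIn p P E := by
  haveI := Fact.mk hp
  obtain ⟨P⟩ := (inferInstance : Nonempty (Sylow p E))
  refine ⟨(P : Subgroup E).map E.subtype, Subgroup.map_subtype_le _, P.2.map _, ?_⟩
  rw [Subgroup.subgroupOf, Subgroup.comap_map_eq_self_of_injective E.subtype_injective]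
  exact P.not_dvd_index

theorem exists_max {L P : Subgroup G} (h : L < P) : ∃ M, L ≤ M ∧ IsMaximalIn M P := by
  obtain ⟨M, ⟨h1, h2⟩, hmax⟩ := wellFounded_gt.has_min {M : Subgroup G | L ≤ M ∧ M < P} ⟨L, le_rfl, h⟩
  refine ⟨M, h1, h2, fun K hMK hKP => ?_⟩
  by_contra hne
  exact hmax K ⟨h1.trans hMK.le, lt_of_le_of_ne hKP hne⟩ hMK

theorem max_normal {p : ℕ} (hp : p.Prime) {M P : Subgroup G} (hP : IsPGroup p P)
    (hM : IsMaximalIn M P) : (M.subgroupOf P).Normal := by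
  haveI := Fact.mk hp
  haveI := hP.isNilpotent
  have hnc : NormalizerCondition P := Group.normalizerCondition_of_isNilpotent
  have hlt := hnc (M.subgroupOf P) (lt_top_iff_ne_top.2 fun h => hM.1.not_ge (Subgroup.subgroupOf_eq_top.1 h))
  rw [← Subgroup.normalizer_eq_top_iff]
  set N := Subgroup.normalizer (M.subgroupOf P : Set P)
  have h1 : M < N.map P.subtype := by
    have h0 : (M.subgroupOf P).map P.subtype = M := Subgroup.map_subgroupOf_eq_of_le hM.1.le
    rw [← h0]
    exact Subgroup.map_lt_map_iff_of_injective P.subtype_injective |>.2 hlt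
  have h2 := hM.2 _ h1 (Subgroup.map_subtype_le _)
  rw [eq_top_iff]
  intro x _
  have : (x : G) ∈ N.map P.subtype := by rw [h2]; exact x.2
  obtain ⟨y, hy, e⟩ := this
  have : y = x := Subtype.ext e
  exact this ▸ hy

theorem max_mul {p : ℕ} (hp : p.Prime) {M P : Subgroup G} (hP : IsPGroup p P)
    (hM : IsMaximalIn M P) {x : G} (hx : x ∈ P) (hxM : x ∉ M) {y : G} (hy : y ∈ P) :
    ∃ m ∈ M, ∃ k : ℤ, y = m * x ^ k := by
  haveI := max_normal hp hP hM
  have h1 : M < M ⊔ Subgroup.zpowers x := lt_of_le_of_ne le_sup_left fun h => hxM (by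
    rw [h]; exact Subgroup.mem_sup_right (Subgroup.mem_zpowers x))
  have h2 := hM.2 _ h1 (sup_le hM.1.le (by simpa using hx))
  have h3 : M.subgroupOf P ⊔ Subgroup.zpowers (⟨x, hx⟩ : P) = ⊤ := by
    apply Subgroup.map_injective P.subtype_injective
    rw [Subgroup.map_sup, Subgroup.map_subgroupOf_eq_of_le hM.1.le, MonoidHom.map_zpowers,
      ← MonoidHom.range_eq_map, Subgroup.range_subtype]
    exact h2
  have h4 : (⟨y, hy⟩ : P) ∈ M.subgroupOf P ⊔ Subgroup.zpowers (⟨x, hx⟩ : P) := by rw [h3]; trivial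
  rw [Subgroup.mem_sup_of_normal_left] at h4
  obtain ⟨m, hm, _, ⟨k, rfl⟩, e⟩ := h4
  exact ⟨m, hm, k, by simpa using (congrArg Subtype.val e).symm⟩

end gen

theorem PChain.comap_inj {X L : Type*} [Group X] [Group L] (ι : L →* X) (hi : Function.Injective ι)
    (h : PChain (⊥ : Subgroup X) ⊤) : PChain (⊥ : Subgroup L) ⊤ := by
  have := PChain.map' (fun Y : Subgroup X => Y.comap ι) (fun Y hY => hY.comap ι)
    (fun a b h => Subgroup.comap_mono h) (fun B A hB hA hBA => by
      rw [Subgroup.relIndex_comap]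
      exact relIndex_dvd_right hB (Subgroup.map_comap_le ι A)) h
  simpa [MonoidHom.comap_bot, (MonoidHom.ker_eq_bot_iff ι).2 hi] using this

theorem ss_sylow {q : ℕ} (hq : q.Prime) : ∀ n : ℕ, ∀ (X : Type u) [Group X] [Finite X], Nat.card X = n →
    PChain (⊥ : Subgroup X) ⊤ → (∀ r : ℕ, r.Prime → r ∣ Nat.card X → r ≤ q) →
    ∃ Q : Subgroup X, Q.Normal ∧ IsPGroup q Q ∧ ¬ q ∣ Q.index := by
  haveI := Fact.mk hq
  intro n
  induction n using Nat.strong_induction_on with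
  | _ n ih =>
  intro X _ _ hn hc hr
  rcases Relation.ReflTransGen.cases_head hc with h | ⟨A, h1, h2⟩
  · refine ⟨⊥, inferInstance, IsPGroup.of_bot, ?_⟩
    rw [h]; simp [hq.one_lt.ne']
  · obtain ⟨-, hA, -, hAp⟩ := h1
    rw [Subgroup.relIndex_bot_left] at hAp
    have hlt : Nat.card (X ⧸ A) < n := by
      have := Subgroup.card_eq_card_quotient_mul_card_subgroup A
      have h3 := hAp.two_le
      have h4 : 0 < Nat.card (X ⧸ A) := Nat.card_pos
      rw [← hn, this]; nlinarith
    have hch : PChain (⊥ : Subgroup (X ⧸ A)) ⊤ := by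
      have := PChain.map_surj (QuotientGroup.mk' A) (QuotientGroup.mk'_surjective A) hc
      rwa [Subgroup.map_bot, Subgroup.map_top_of_surjective _ (QuotientGroup.mk'_surjective A)] at this
    obtain ⟨Q, hQn, hQp, hQi⟩ := ih _ hlt (X ⧸ A) rfl hch
      (fun r hrp hrd => hr r hrp (hrd.trans (Subgroup.card_quotient_dvd_card A)))
    set K := Q.comap (QuotientGroup.mk' A) with hK
    haveI hKn : K.Normal := hQn.comap _
    have hKi : K.index = Q.index := Subgroup.index_comap_of_surjective Q (QuotientGroup.mk'_surjective A)
    have hAK : A ≤ K := by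
      conv_lhs => rw [← QuotientGroup.ker_mk' A, ← MonoidHom.comap_bot]
      exact Subgroup.comap_mono bot_le
    have hcard : Nat.card K = Nat.card A * Nat.card Q := by
      rw [← relIndex_comap_mk (N := A) Q, ← Subgroup.relIndex_bot_left A, ← Subgroup.relIndex_bot_left K]
      exact (Subgroup.relIndex_mul_relIndex ⊥ A K bot_le hAK).symm
    obtain ⟨k, hk⟩ := IsPGroup.iff_card.1 hQp
    by_cases hrq : Nat.card A = q
    · refine ⟨K, hKn, ?_, hKi ▸ hQi⟩
      rw [IsPGroup.iff_card]
      exact ⟨k + 1, by rw [hcard, hrq, hk, pow_succ]; ring⟩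
    · have hrlt : Nat.card A < q :=
        lt_of_le_of_ne (hr _ hAp (Subgroup.card_subgroup_dvd_card A)) hrq
      obtain ⟨R⟩ := (inferInstance : Nonempty (Sylow q K))
      have hRc : Nat.card R = q ^ k := by
        rw [R.card_eq_multiplicity, hcard, hk, Nat.factorization_mul hAp.ne_zero (pow_pos hq.pos k).ne']
        rw [Finsupp.add_apply, hAp.factorization, hq.factorization_pow]
        simp [hrq]
      have hRi : (R : Subgroup K).index = Nat.card A := by
        have := Subgroup.card_mul_index (R : Subgroup K)
        rw [hcard, hk] at this
        have h5 : Nat.card (R : Subgroup K) = q ^ k := hRc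
        rw [h5, mul_comm] at this
        exact Nat.eq_of_mul_eq_mul_right (pow_pos hq.pos k) this
      have hns : Nat.card (Sylow q K) = 1 := by
        have h5 := R.card_dvd_index
        rw [hRi] at h5
        have h6 := card_sylow_modEq_one q K
        have h7 := Nat.le_of_dvd hAp.pos h5
        exact Nat.ModEq.eq_of_lt_of_lt h6 (by omega) hq.one_lt
      haveI : Subsingleton (Sylow q K) := (Nat.card_eq_one_iff_unique.1 hns).1
      haveI : (R : Subgroup K).Characteristic := inferInstance
      refine ⟨(R : Subgroup K).map K.subtype, ConjAct.normal_of_characteristic_of_normal, R.2.map _, ?_⟩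
      have h8 : ((R : Subgroup K).map K.subtype).index = (R : Subgroup K).index * K.index := by
        rw [Subgroup.index_map_subtype]
      rw [h8, hKi, hRi, hq.dvd_mul]
      rintro (h9 | h9)
      · exact (Nat.le_of_dvd hAp.pos h9).not_gt hrlt
      · exact hQi h9

theorem noCyc {S : Type*} [Group S] [Finite S] [IsSimpleGroup S] (hnc : ¬ ∀ a b : S, a * b = b * a)
    {Q : Subgroup S} (hQ : IsPGroup (Nat.card S).minFac Q) (hi : ¬ (Nat.card S).minFac ∣ Q.index) :
    ¬ IsCyclic Q := by
  intro hc
  have hS : Nat.card S ≠ 1 := fun h => by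
    have := (Nat.card_eq_one_iff_unique.1 h).1
    exact not_subsingleton S this
  haveI := Fact.mk (Nat.minFac_prime hS)
  have hc' : IsCyclic (hQ.toSylow hi : Subgroup S) := hc
  have h1 := IsCyclic.isComplement' rfl hc'
  set N := (MonoidHom.transferSylow (hQ.toSylow hi) (hc'.normalizer_le_centralizer rfl)).ker with hN
  have h2 : N.IsComplement' Q := h1
  haveI : N.Normal := by rw [hN]; infer_instance
  rcases (inferInstance : N.Normal).eq_bot_or_eq_top with h | h
  · rw [h, Subgroup.isComplement'_bot_left] at h2
    apply hnc
    have h3 : IsCyclic (⊤ : Subgroup S) := h2 ▸ hc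
    intro a b
    have h4 := h3.commGroup.mul_comm ⟨a, trivial⟩ ⟨b, trivial⟩
    exact congrArg Subtype.val h4
  · rw [h, Subgroup.isComplement'_top_left] at h2
    rw [h2, Subgroup.index_bot] at hi
    exact hi (Nat.minFac_dvd _)

section
variable {G : Type u} [Group G] {E : Subgroup G} {S : Type u} [Group S]

def tau (φ : E →* S) (X : Subgroup G) : Subgroup S := (X.subgroupOf E).map φ

theorem mem_tau {φ : E →* S} {X : Subgroup G} {x : E} (hx : (x : G) ∈ X) : φ x ∈ tau φ X :=
  ⟨x, hx, rfl⟩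

theorem tau_mono (φ : E →* S) {X Y : Subgroup G} (h : X ≤ Y) : tau φ X ≤ tau φ Y :=
  Subgroup.map_mono (Subgroup.comap_mono h)

theorem tau_normal {φ : E →* S} (hφ : Function.Surjective φ) {X : Subgroup G} (h : X.Normal) :
    (tau φ X).Normal := (h.comap E.subtype).map φ hφ

theorem tau_solvable (φ : E →* S) {X : Subgroup G} (h : Group.IsSolvable X) :
    Group.IsSolvable (tau φ X) := by
  have h1 : Group.IsSolvable (X.subgroupOf E) := by
    let f : X.subgroupOf E →* X := (E.subtype.comp (X.subgroupOf E).subtype).codRestrict X (fun x => x.2)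
    refine Group.isSolvable_of_isSolvable_injective (f := f) ?_
    intro a b hab
    have := congrArg Subtype.val hab
    exact Subtype.ext (Subtype.ext this)
  exact Group.isSolvable_of_surjective (MonoidHom.subgroupMap_surjective φ (X.subgroupOf E))

theorem tau_pgroup (φ : E →* S) {p : ℕ} {X : Subgroup G} (h : IsPGroup p X) : IsPGroup p (tau φ X) := by
  refine IsPGroup.map ?_ φ
  exact h.comap_of_injective E.subtype E.subtype_injective

variable [Finite G]  [IsSimpleGroup S]

theorem tau_solv_bot {φ : E →* S} (hφ : Function.Surjective φ) (hnc : ¬ ∀ a b : S, a * b = b * a)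
    {X : Subgroup G} (hX : X.Normal) (h : Group.IsSolvable X) : tau φ X = ⊥ := by
  rcases (tau_normal hφ hX).eq_bot_or_eq_top with h1 | h1
  · exact h1
  · exfalso
    apply hnc
    rw [IsSimpleGroup.comm_iff_isSolvable]
    have h2 : Group.IsSolvable (⊤ : Subgroup S) := h1 ▸ tau_solvable φ h
    exact Group.isSolvable_of_isSolvable_injective (f := (Subgroup.topEquiv (G := S)).symm.toMonoidHom)
      (Subgroup.topEquiv (G := S)).symm.injective

theorem not_pgroup [Finite S] (hnc : ¬ ∀ a b : S, a * b = b * a) {p : ℕ} (hp : p.Prime) : ¬ IsPGroup p S := by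
  intro h
  haveI := Fact.mk hp
  haveI := h.isNilpotent
  exact hnc (IsSimpleGroup.comm_iff_isSolvable.2 inferInstance)

theorem tau_max_cyclic (φ : E →* S) {p : ℕ} (hp : p.Prime) {M P T : Subgroup G} (hP : IsPGroup p P)
    (hM : IsMaximalIn M P) (hPE : P ≤ E) (h : tau φ (M ⊓ T) = ⊥) : IsCyclic (tau φ (P ⊓ T)) := by
  by_cases hle : P ⊓ T ≤ M
  · have : tau φ (P ⊓ T) = ⊥ := by
      rw [← le_bot_iff, ← h]
      exact tau_mono φ (le_inf hle inf_le_right)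
    rw [this]; infer_instance
  · obtain ⟨x, hx, hxM⟩ := SetLike.not_le_iff_exists.1 hle
    refine ⟨⟨φ ⟨x, hPE hx.1⟩, mem_tau hx⟩, ?_⟩
    rintro ⟨_, y, hy, rfl⟩
    have hy' : (y : G) ∈ P ⊓ T := hy
    obtain ⟨m, hm, k, e⟩ := max_mul hp hP hM hx.1 hxM hy'.1
    have hmT : m ∈ T := by
      have : m = y * (x ^ k)⁻¹ := by rw [e]; group
      rw [this]; exact T.mul_mem hy'.2 (T.inv_mem (T.zpow_mem hx.2 k))
    have h1 : φ ⟨m, hPE (hM.1.le hm)⟩ = 1 := by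
      have : φ ⟨m, hPE (hM.1.le hm)⟩ ∈ tau φ (M ⊓ T) := mem_tau ⟨hm, hmT⟩
      rw [h] at this; exact this
    refine ⟨k, Subtype.ext ?_⟩
    have h2 : y = ⟨m, hPE (hM.1.le hm)⟩ * ⟨x, hPE hx.1⟩ ^ k := Subtype.ext (by simpa using e)
    show (φ ⟨x, hPE hx.1⟩) ^ k = φ y
    rw [h2, map_mul, h1, one_mul, map_zpow]

theorem hyper_solv {p : ℕ} (hp : p.Prime) {M : Subgroup G} (hM : IsPGroup p M) :
    ∃ Z : Subgroup G, Z.Normal ∧ Group.IsSolvable Z ∧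
      ∀ x : G, (QuotientGroup.mk x : G ⧸ M.normalCore) ∈ UHypercenter (G ⧸ M.normalCore) → x ∈ Z := by
  haveI := Fact.mk hp
  obtain ⟨M0, hn, hc, hle⟩ := uhyper_le (G := G ⧸ M.normalCore)
  refine ⟨M0.comap (QuotientGroup.mk' _), hn.comap _, ?_, fun x hx => hle hx⟩
  have hD : IsPGroup p M.normalCore := hM.to_le (Subgroup.normalCore_le M)
  haveI := hD.isNilpotent
  refine solvable_ext (B := M.normalCore) ?_ inferInstance ?_
  · conv_lhs => rw [← QuotientGroup.ker_mk' M.normalCore, ← MonoidHom.comap_bot]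
    exact Subgroup.comap_mono bot_le
  · rw [Subgroup.map_comap_eq_self_of_surjective (QuotientGroup.mk'_surjective _)]
    exact hc.solvable inferInstance

theorem no_us [Finite S] {φ : E →* S} (hφ : Function.Surjective φ) (hnc : ¬ ∀ a b : S, a * b = b * a)
    {P M : Subgroup G} (hP : IsSylowIn (Nat.card S).minFac P E)
    (hM : IsMaximalIn M P) : ¬ UsQuasinormal M := by
  rintro ⟨T, hT, hs, hZ⟩
  have hS : Nat.card S ≠ 1 := fun h => by
    have := (Nat.card_eq_one_iff_unique.1 h).1
    exact not_subsingleton S this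
  have hp := Nat.minFac_prime hS
  set p := (Nat.card S).minFac with hpdef
  haveI := Fact.mk hp
  have hMp : IsPGroup p M := hP.2.1.to_le hM.1.le
  obtain ⟨Q, hQ⟩ := exists_sylowIn p hp (⊤ : Subgroup G)
  have hMO := sperm_core hp hMp hT hs hQ
  set O := (T ⊔ Q).normalCore with hO
  have hOn : O.Normal := by rw [hO]; infer_instance
  have hMT : tau φ (M ⊓ T) = ⊥ := by
    obtain ⟨Z, hZn, hZs, hZm⟩ := hyper_solv hp hMp
    rw [← le_bot_iff, ← tau_solv_bot hφ hnc hZn hZs]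
    exact tau_mono φ (fun x hx => hZm x (hZ x hx))
  have hPi : ∀ T : Subgroup G, T.Normal → tau φ T = ⊤ → ¬ p ∣ (tau φ (P ⊓ T)).index := by
    intro T hT hTt
    haveI hTn : (T.subgroupOf E).Normal := inferInstance
    have h1 : (P.subgroupOf E).relIndex (T.subgroupOf E ⊔ P.subgroupOf E) =
        (P.subgroupOf E).relIndex (T.subgroupOf E) := by
      refine relIndex_of_mul le_sup_left ?_
      intro r hr
      rw [Subgroup.mem_sup_of_normal_left] at hr
      obtain ⟨y, hy, z, hz, e⟩ := hr
      exact ⟨y, hy, z, hz, e.symm⟩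
    have h2 : ¬ p ∣ (P.subgroupOf E).relIndex (T.subgroupOf E) := by
      rw [← h1]
      intro h
      exact hP.2.2 (h.trans (Dvd.intro _ (Subgroup.relIndex_mul_index le_sup_right)))
    intro h
    apply h2
    refine h.trans ?_
    have hsurj : Function.Surjective (φ.comp (T.subgroupOf E).subtype) := by
      intro s
      have : s ∈ tau φ T := by rw [hTt]; trivial
      obtain ⟨y, hy, rfl⟩ := this
      exact ⟨⟨y, hy⟩, rfl⟩
    have h3 := Subgroup.index_map_dvd ((P.subgroupOf E).subgroupOf (T.subgroupOf E)) hsurj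
    have h4 : ((P.subgroupOf E).subgroupOf (T.subgroupOf E)).map (φ.comp (T.subgroupOf E).subtype)
        = tau φ (P ⊓ T) := by
      rw [← Subgroup.map_map, Subgroup.subgroupOf_map_subtype]
      rfl
    rwa [h4] at h3
  have htop : tau φ T ≠ ⊤ := by
    intro h
    exact noCyc hnc (tau_pgroup φ (hP.2.1.to_le inf_le_left)) (hPi T hT h)
      (tau_max_cyclic φ hp hP.2.1 hM hP.1 hMT)
  have hTb : tau φ T = ⊥ := (tau_normal hφ hT).eq_bot_or_eq_top.resolve_right htop
  rcases (tau_normal hφ hOn).eq_bot_or_eq_top with h | h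
  · have h1 : tau φ (M ⊓ ⊤) = ⊥ := by
      rw [← le_bot_iff, ← h, inf_top_eq]; exact tau_mono φ hMO
    refine noCyc hnc (tau_pgroup φ (hP.2.1.to_le inf_le_left)) (hPi ⊤ inferInstance ?_)
      (tau_max_cyclic φ hp hP.2.1 hM hP.1 h1)
    rw [eq_top_iff]
    intro s _
    obtain ⟨y, rfl⟩ := hφ s
    exact mem_tau trivial
  · refine not_pgroup hnc hp ?_
    intro s
    have : s ∈ tau φ O := by rw [h]; trivial
    obtain ⟨y, hy, rfl⟩ := this
    have h1 : (y : G) ∈ T ⊔ Q := Subgroup.normalCore_le _ hy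
    rw [Subgroup.mem_sup_of_normal_left] at h1
    obtain ⟨t, ht, z, hz, e⟩ := h1
    obtain ⟨k, hk⟩ := hQ.2.1 ⟨z, hz⟩
    have hk' : z ^ p ^ k = 1 := congrArg Subtype.val hk
    refine ⟨k, ?_⟩
    have h2 : (y : G) ^ p ^ k ∈ T := by
      rw [← QuotientGroup.eq_one_iff, QuotientGroup.mk_pow, ← e, QuotientGroup.mk_mul,
        (QuotientGroup.eq_one_iff t).2 ht, one_mul, ← QuotientGroup.mk_pow, hk', QuotientGroup.mk_one]
    have h3 : φ (y ^ p ^ k) ∈ tau φ T := mem_tau h2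
    rw [hTb, map_pow] at h3
    exact h3

end

section
variable {G : Type u} [Group G] [Finite G] {E : Subgroup G} {S : Type u} [Group S] [Finite S]

theorem supp_trans {φ : E →* S} (hφ : Function.Surjective φ) {p q : ℕ} (hp : p.Prime) (hq : q.Prime)
    (hpq : p ≠ q) (hmax : ∀ r : ℕ, r.Prime → r ∣ Nat.card S → r ≤ q) {M : Subgroup G}
    (hM : IsPGroup p M) (hME : M ≤ E) (hs : HasSupersolubleSupplement M) (Q : Sylow q S) :
    ∀ s : S, ∃ a ∈ tau φ M, (a⁻¹ * s) • Q = Q := by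
  haveI := Fact.mk hp
  haveI := Fact.mk hq
  obtain ⟨T, hT, hMT⟩ := hs
  have hprod : ∀ s : S, ∃ a ∈ tau φ M, ∃ b ∈ tau φ T, s = a * b := by
    intro s
    obtain ⟨e, rfl⟩ := hφ s
    have : (e : G) ∈ (M : Set G) * (T : Set G) := by rw [hMT]; trivial
    obtain ⟨m, hm, t, ht, h⟩ := this
    have hmt : m * t = e := h
    have hte : t ∈ E := by
      have : t = m⁻¹ * e := by rw [← hmt]; group
      rw [this]; exact E.mul_mem (E.inv_mem (hME hm)) e.2
    refine ⟨φ ⟨m, hME hm⟩, mem_tau hm, φ ⟨t, hte⟩, mem_tau ht, ?_⟩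
    rw [← map_mul]; congr 1; exact Subtype.ext hmt.symm
  -- tau T is supersoluble
  have hc : PChain (⊥ : Subgroup (tau φ T)) ⊤ := by
    let ι : T.subgroupOf E →* T := (E.subtype.comp (T.subgroupOf E).subtype).codRestrict T (fun x => x.2)
    have h1 := PChain.comap_inj ι (fun a b hab => by
      have := congrArg Subtype.val hab
      exact Subtype.ext (Subtype.ext this)) (pchain_of_supersoluble hT)
    have hsj := MonoidHom.subgroupMap_surjective φ (T.subgroupOf E)
    have := PChain.map_surj (φ.subgroupMap (T.subgroupOf E)) hsj h1
    rwa [Subgroup.map_bot, Subgroup.map_top_of_surjective _ hsj] at this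
  obtain ⟨Q0, hQn, hQp, hQi⟩ := ss_sylow hq _ (tau φ T) rfl hc
    (fun r hr hd => hmax r hr (hd.trans (Subgroup.card_subgroup_dvd_card _)))
  have hidx : ¬ q ∣ (tau φ T).index := by
    have h1 : (tau φ T).relIndex ⊤ = (tau φ T).relIndex (tau φ M) := by
      refine relIndex_of_mul le_top fun s _ => hprod s
    rw [Subgroup.relIndex_top_right] at h1
    rw [h1]
    intro h
    have h2 := h.trans (Subgroup.relIndex_dvd_card (tau φ T) (tau φ M))
    obtain ⟨k, hk⟩ := IsPGroup.iff_card.1 (tau_pgroup φ hM)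
    rw [hk] at h2
    exact hpq ((Nat.prime_dvd_prime_iff_eq hq hp).1 (hq.dvd_of_dvd_pow h2)).symm
  have hQi' : ¬ q ∣ (Q0.map (tau φ T).subtype).index := by
    rw [Subgroup.index_map_subtype, hq.dvd_mul]
    exact fun h => h.elim hQi hidx
  let Q1 : Sylow q S := (hQp.map (tau φ T).subtype).toSylow hQi'
  have hfix : ∀ b ∈ tau φ T, b • Q1 = Q1 := by
    intro b hb
    rw [Sylow.smul_eq_iff_mem_normalizer]
    show b ∈ Subgroup.normalizer (Q0.map (tau φ T).subtype : Set S)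
    rw [Subgroup.mem_normalizer_iff]
    have key : ∀ b ∈ tau φ T, ∀ h ∈ Q0.map (tau φ T).subtype, b * h * b⁻¹ ∈ Q0.map (tau φ T).subtype := by
      rintro b hb _ ⟨h, hh, rfl⟩
      exact ⟨⟨b, hb⟩ * h * ⟨b, hb⟩⁻¹, hQn.conj_mem h hh ⟨b, hb⟩, rfl⟩
    intro h
    refine ⟨fun hh => key b hb h hh, fun hh => ?_⟩
    have := key b⁻¹ (inv_mem hb) _ hh
    convert this using 1
    group
  have htr : ∀ Q' : Sylow q S, ∃ a ∈ tau φ M, a • Q1 = Q' := by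
    intro Q'
    obtain ⟨s, hs⟩ := MulAction.exists_smul_eq S Q1 Q'
    obtain ⟨a, ha, b, hb, rfl⟩ := hprod s
    refine ⟨a, ha, ?_⟩
    rw [← hs, mul_smul, hfix b hb]
  intro s
  obtain ⟨a, ha, ha1⟩ := htr Q
  obtain ⟨c, hc, hc1⟩ := htr (s • Q)
  refine ⟨c * a⁻¹, mul_mem hc (inv_mem ha), ?_⟩
  have h3 : s • Q = (c * a⁻¹) • Q := by
    rw [← hc1, ← ha1]; simp [mul_smul]
  rw [mul_smul, h3, inv_smul_smul]

theorem E_solv [IsSimpleGroup S] {φ : E →* S} (hφ : Function.Surjective φ)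
    (hnc : ¬ ∀ a b : S, a * b = b * a)
    (hyp : ∀ p : ℕ, p.Prime → ∀ P : Subgroup G, IsSylowIn p P E →
      ¬ IsCyclic P → ∀ M : Subgroup G, IsMaximalIn M P →
        ¬ HasSupersolubleSupplement M → UsQuasinormal M) : False := by
  have hS : Nat.card S ≠ 1 := fun h => by
    have := (Nat.card_eq_one_iff_unique.1 h).1
    exact not_subsingleton S this
  have hp := Nat.minFac_prime hS
  obtain ⟨P, hP⟩ := exists_sylowIn (Nat.card S).minFac hp E
  have hPi : ¬ (Nat.card S).minFac ∣ (tau φ P).index := fun h =>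
    hP.2.2 (h.trans (Subgroup.index_map_dvd _ hφ))
  have hPnc : ¬ IsCyclic P := by
    intro hc
    refine noCyc hnc (tau_pgroup φ hP.2.1) hPi ?_
    have h1 : IsCyclic (P.subgroupOf E) := by
      have := (Subgroup.subgroupOfEquivOfLe hP.1)
      exact isCyclic_of_surjective this.symm this.symm.surjective
    exact isCyclic_of_surjective _ (MonoidHom.subgroupMap_surjective φ (P.subgroupOf E))
  have hsup : ∀ M, IsMaximalIn M P → HasSupersolubleSupplement M := by
    intro M hM
    by_contra h
    exact no_us hφ hnc hP hM (hyp _ hp P hP hPnc M hM h)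
  -- largest prime
  obtain ⟨q, hqm, hqmax⟩ := (Nat.card S).primeFactors.exists_max_image id
    ⟨_, Nat.mem_primeFactors.2 ⟨hp, Nat.minFac_dvd _, Nat.card_pos.ne'⟩⟩
  obtain ⟨hq, hqd, -⟩ := Nat.mem_primeFactors.1 hqm
  have hmax : ∀ r : ℕ, r.Prime → r ∣ Nat.card S → r ≤ q := fun r hr hd =>
    hqmax r (Nat.mem_primeFactors.2 ⟨hr, hd, Nat.card_pos.ne'⟩)
  haveI := Fact.mk hp
  haveI := Fact.mk hq
  have hpq : (Nat.card S).minFac ≠ q := by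
    intro h
    apply not_pgroup hnc hp
    rw [IsPGroup.iff_card]
    refine ⟨_, Nat.eq_prime_pow_of_unique_prime_dvd Nat.card_pos.ne' ?_⟩
    intro r hr hd
    exact le_antisymm (h ▸ hmax r hr hd) (Nat.minFac_le_of_dvd hr.two_le hd)
  obtain ⟨Q⟩ := (inferInstance : Nonempty (Sylow q S))
  have htr : ∀ M, IsMaximalIn M P → ∀ s : S, ∃ a ∈ tau φ M, (a⁻¹ * s) • Q = Q := fun M hM =>
    supp_trans hφ hp hq hpq hmax (hP.2.1.to_le hM.1.le) (hM.1.le.trans hP.1) (hsup M hM) Q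
  set P0 := P ⊓ ((MulAction.stabilizer S Q).comap φ).map E.subtype with hP0
  have hmem : ∀ x (hx : x ∈ P), φ ⟨x, hP.1 hx⟩ • Q = Q → x ∈ P0 := fun x hx h =>
    ⟨hx, ⟨⟨x, hP.1 hx⟩, h, rfl⟩⟩
  have hmem' : ∀ x : E, (x : G) ∈ P0 → φ x • Q = Q := by
    rintro x ⟨hx, y, hy, e⟩
    have : y = x := Subtype.ext e
    rw [← this]; exact hy
  rcases eq_or_lt_of_le (inf_le_left : P0 ≤ P) with h | h
  · have hPb : ⊥ < P := by
      rw [bot_lt_iff_ne_bot]; rintro rfl; exact hPnc inferInstance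
    obtain ⟨M, -, hM⟩ := exists_max hPb
    have hall : ∀ s : S, s • Q = Q := by
      intro s
      obtain ⟨_, ⟨a, ha, rfl⟩, h1⟩ := htr M hM s
      have h2 : φ a • Q = Q := hmem' a (by rw [hP0, h]; exact hM.1.le ha)
      rw [mul_smul, inv_smul_eq_iff, h2] at h1
      exact h1
    have hQn : (Q : Subgroup S).Normal := by
      rw [← Subgroup.normalizer_eq_top_iff, eq_top_iff]
      intro s _
      exact Sylow.smul_eq_iff_mem_normalizer.1 (hall s)
    rcases hQn.eq_bot_or_eq_top with h1 | h1
    · have := Q.not_dvd_index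
      rw [h1, Subgroup.index_bot] at this
      exact this hqd
    · apply not_pgroup hnc hq
      have h2 : IsPGroup q (⊤ : Subgroup S) := h1 ▸ Q.2
      exact h2.of_equiv Subgroup.topEquiv
  · obtain ⟨M, hPM, hM⟩ := exists_max h
    apply hM.1.not_ge
    intro x hx
    obtain ⟨_, ⟨a, ha, rfl⟩, h1⟩ := htr M hM (φ ⟨x, hP.1 hx⟩)
    have ha' : (a : G) ∈ M := ha
    have h2 : (a : G)⁻¹ * x ∈ P0 := by
      refine hmem _ (P.mul_mem (P.inv_mem (hM.1.le ha')) hx) ?_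
      rw [← map_inv, ← map_mul] at h1
      exact h1
    have := M.mul_mem ha' (hPM h2)
    simpa using this

theorem FS_nilpotent {H : Subgroup G}
    (hyp : ∀ p : ℕ, p.Prime → ∀ P : Subgroup G, IsSylowIn p P (FStarIn H) →
      ¬ IsCyclic P → ∀ M : Subgroup G, IsMaximalIn M P →
        ¬ HasSupersolubleSupplement M → UsQuasinormal M) : Group.IsNilpotent (FStarIn H) := by
  apply FS_nilp
  by_contra hs
  obtain ⟨S, _, φ, hφ, hS, hnc⟩ := FS_simple hs
  haveI : Finite S := Finite.of_surjective φ hφ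
  exact E_solv hφ hnc hyp

end

theorem PChain.comap' {X L : Type*} [Group X] [Group L] (ι : L →* X) {B A : Subgroup X}
    (h : PChain B A) : PChain (B.comap ι) (A.comap ι) :=
  PChain.map' (fun Y : Subgroup X => Y.comap ι) (fun Y hY => hY.comap ι)
    (fun a b h => Subgroup.comap_mono h) (fun B A hB hA hBA => by
      rw [Subgroup.relIndex_comap]
      exact relIndex_dvd_right hB (Subgroup.map_comap_le ι A)) h

section
variable {G : Type u} [Group G] [Finite G] 

theorem perm_of_inv {A B : Subgroup G} (h : ∀ b ∈ B, ∀ a ∈ A, b * a * b⁻¹ ∈ A) :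
    (A : Set G) * (B : Set G) = (B : Set G) * (A : Set G) := by
  ext x
  constructor
  · rintro ⟨a, ha, b, hb, rfl⟩
    exact ⟨b, hb, b⁻¹ * a * b, by simpa using h b⁻¹ (inv_mem hb) a ha, by simp [mul_assoc]⟩
  · rintro ⟨b, hb, a, ha, rfl⟩
    exact ⟨b * a * b⁻¹, h b hb a ha, b, hb, by simp⟩

theorem exists_N1 {p : ℕ} (hp : p.Prime) {Q D N : Subgroup G} (hQ : IsPGroup p Q) (hD : D.Normal)
    (hN : N.Normal) (hDN : D < N) (hNQ : N ≤ Q) (hab : ∀ x ∈ N, ∀ y ∈ N, x * y * x⁻¹ * y⁻¹ ∈ D) :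
    ∃ N1, D ≤ N1 ∧ IsMaximalIn N1 N ∧ ∀ g ∈ Q, ∀ n ∈ N1, g * n * g⁻¹ ∈ N1 := by
  haveI := Fact.mk hp
  obtain ⟨N1, ⟨h1, h2, h3⟩, hmax⟩ := wellFounded_gt.has_min
    {L : Subgroup G | D ≤ L ∧ L < N ∧ ∀ g ∈ Q, ∀ n ∈ L, g * n * g⁻¹ ∈ L}
    ⟨D, le_rfl, hDN, fun g _ n hn => hD.conj_mem n hn g⟩
  refine ⟨N1, h1, ⟨h2, fun L hL hLN => ?_⟩, h3⟩
  have hc : IsChiefFactor (N.subgroupOf Q) (N1.subgroupOf Q) := by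
    refine ⟨inferInstance, ⟨fun n hn g => h3 g g.2 n hn⟩, ?_, ?_⟩
    · refine lt_of_le_not_ge (Subgroup.comap_mono h2.le) fun h => h2.not_ge ?_
      intro x hx
      exact h (show (⟨x, hNQ hx⟩ : Q) ∈ N.subgroupOf Q from hx)
    · intro K hK hK1 hK2
      refine hmax (K.map Q.subtype) ⟨?_, ?_, ?_⟩ ?_
      · intro x hx
        exact ⟨⟨x, hNQ (hDN.le hx)⟩, hK1.le (h1 hx), rfl⟩
      · have := (Subgroup.map_lt_map_iff_of_injective Q.subtype_injective).2 hK2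
        rwa [Subgroup.map_subgroupOf_eq_of_le hNQ] at this
      · rintro g hg _ ⟨n, hn, rfl⟩
        exact ⟨_, hK.conj_mem n hn ⟨g, hg⟩, rfl⟩
      · have := (Subgroup.map_lt_map_iff_of_injective Q.subtype_injective).2 hK1
        rwa [Subgroup.map_subgroupOf_eq_of_le (h2.le.trans hNQ)] at this
  have hcen : ∀ g ∈ Q, ∀ n ∈ N, g * n * g⁻¹ * n⁻¹ ∈ N1 := by
    intro g hg n hn
    obtain ⟨y, hy, hyn⟩ := qn_of_nilp hQ.isNilpotent _ _ hc ⟨g, hg⟩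
    have h4 : g * n * g⁻¹ * (y * n * (y : G)⁻¹)⁻¹ ∈ N1 := hyn ⟨n, hNQ hn⟩ hn
    have h5 := h1 (hab y hy n hn)
    have h6 := N1.mul_mem h4 h5
    convert h6 using 1
    group
  by_contra hne
  refine hmax L ⟨h1.trans hL.le, lt_of_le_of_ne hLN hne, fun g hg n hn => ?_⟩ hL
  have := L.mul_mem (hL.le (hcen g hg n (hLN hn))) hn
  simpa using this

theorem exists_M {p : ℕ} (hp : p.Prime) {P D N N1 : Subgroup G} (hDP : N ≤ P)
    (hpow : ∀ x ∈ P, x ^ p ∈ D) (hcomm : ∀ x ∈ P, ∀ y ∈ P, x * y * x⁻¹ * y⁻¹ ∈ D)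
    (hDN1 : D ≤ N1) (hN1 : N1 < N) :
    ∃ M, N1 ≤ M ∧ ¬ N ≤ M ∧ IsMaximalIn M P := by
  obtain ⟨M, ⟨h1, h2, h3⟩, hmax⟩ := wellFounded_gt.has_min
    {L : Subgroup G | N1 ≤ L ∧ L ≤ P ∧ ¬ N ≤ L} ⟨N1, le_rfl, hN1.le.trans hDP, hN1.not_ge⟩
  have hDM : D ≤ M := hDN1.trans h1
  have hinv : ∀ b ∈ P, ∀ a ∈ M, b * a * b⁻¹ ∈ M := by
    intro b hb a ha
    have := M.mul_mem (hDM (hcomm b hb a (h2 ha))) ha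
    simpa using this
  refine ⟨M, h1, h3, lt_of_le_of_ne h2 (by rintro rfl; exact h3 hDP), fun L hL hLP => ?_⟩
  have hNL : N ≤ L := by
    by_contra h
    exact hmax L ⟨h1.trans hL.le, hLP, h⟩ hL
  refine le_antisymm hLP fun y hy => ?_
  by_cases hyM : y ∈ M
  · exact hL.le hyM
  have h4 : M < M ⊔ Subgroup.zpowers y := lt_of_le_of_ne le_sup_left fun h => hyM (by
    rw [h]; exact Subgroup.mem_sup_right (Subgroup.mem_zpowers y))
  have hyP : Subgroup.zpowers y ≤ P := by simpa using hy
  have h5 : N ≤ M ⊔ Subgroup.zpowers y := by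
    by_contra h
    exact hmax _ ⟨h1.trans h4.le, sup_le h2 hyP, h⟩ h4
  obtain ⟨n, hn, hnM⟩ := SetLike.not_le_iff_exists.1 h3
  obtain ⟨m, hm, _, ⟨k, rfl⟩, e⟩ := mem_sup_of_perm
    (perm_of_inv fun b hb a ha => hinv b (hyP hb) a ha) (h5 hn)
  have e : n = m * y ^ k := e
  have hyL : y ^ k ∈ L := by
    have : y ^ k = m⁻¹ * n := by rw [e]; group
    rw [this]; exact L.mul_mem (L.inv_mem (hL.le hm)) (hNL hn)
  have hypL : y ^ (p : ℤ) ∈ M := by rw [zpow_natCast]; exact hDM (hpow y hy)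
  have hkp : ¬ (p : ℤ) ∣ k := by
    rintro ⟨j, rfl⟩
    apply hnM
    rw [e, zpow_mul]
    exact M.mul_mem hm (M.zpow_mem hypL j)
  have hcop : IsCoprime (p : ℤ) k := (Nat.prime_iff_prime_int.1 hp).coprime_iff_not_dvd.2 hkp
  obtain ⟨u, v, huv⟩ := hcop
  have : y = (y ^ (p : ℤ)) ^ u * (y ^ k) ^ v := by
    rw [← zpow_mul, ← zpow_mul, ← zpow_add, mul_comm (p : ℤ), mul_comm k, huv, zpow_one]
  rw [this]
  exact L.mul_mem (L.zpow_mem (hL.le hypL) u) (L.zpow_mem hyL v)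

theorem max_prime {p : ℕ} (hp : p.Prime) {D N : Subgroup G} (hN : IsPGroup p N) 
    (hc : IsChiefFactor N D) (hm : IsMaximalIn D N) : (D.relIndex N).Prime := by
  obtain ⟨x, hx, hxD⟩ := SetLike.not_le_iff_exists.1 hm.1.not_ge
  refine PChain.chief (pchain_of_cyclic N hc.1 x hx D hc.2.1 hm.1.le ?_) hc
  intro y hy
  obtain ⟨m, hm', k, e⟩ := max_mul hp hN hm hx hxD hy
  refine ⟨k, ?_⟩
  have := hc.2.1.conj_mem _ (D.inv_mem hm') (x ^ (-k))
  convert this using 1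
  rw [e]; group

/-- case (a) -/
theorem case_a {P D N M T : Subgroup G} (hP : P.Normal) (hc : IsChiefFactor N D) (hNP : N ≤ P)
    (hcomm : ∀ x ∈ P, ∀ y ∈ P, x * y * x⁻¹ * y⁻¹ ∈ D) (hDM : D ≤ M) (hMP : M < P)
    (hu : ∀ N', IsChiefFactor N' D → N' ≤ P → N' = N)
    (hT : IsSupersoluble T) (hMT : (M : Set G) * (T : Set G) = Set.univ) : (D.relIndex N).Prime := by
  have hD := hc.2.1
  have hDP : D ≤ P := hc.2.2.1.le.trans hNP
  have hfac : ∀ g : G, ∃ m ∈ M, ∃ t ∈ T, g = m * t := by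
    intro g
    have : g ∈ (M : Set G) * (T : Set G) := by rw [hMT]; trivial
    obtain ⟨m, hm, t, ht, h⟩ := this
    exact ⟨m, hm, t, ht, h.symm⟩
  have hnorm : ∀ Y : Subgroup G, Y ≤ P → (∀ t ∈ T, ∀ y ∈ Y, t * y * t⁻¹ ∈ Y) → (Y ⊔ D).Normal := by
    intro Y hY hinv
    constructor
    intro z hz g
    rw [Subgroup.mem_sup_of_normal_right] at hz
    obtain ⟨y, hy, d, hd, rfl⟩ := hz
    obtain ⟨m, hm, t, ht, rfl⟩ := hfac g
    have h1 := hinv t ht y hy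
    have h2 := hcomm m (hMP.le hm) _ (hY h1)
    have h3 := hD.conj_mem d hd (m * t)
    have : m * t * (y * d) * (m * t)⁻¹ = (m * (t * y * t⁻¹) * m⁻¹ * (t * y * t⁻¹)⁻¹) * (t * y * t⁻¹) *
      (m * t * d * (m * t)⁻¹) := by group
    rw [this]
    exact (Y ⊔ D).mul_mem ((Y ⊔ D).mul_mem (Subgroup.mem_sup_right h2) (Subgroup.mem_sup_left h1))
      (Subgroup.mem_sup_right h3)
  have hV : ((T ⊓ P) ⊔ D).Normal := hnorm _ inf_le_right fun t ht y hy =>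
    ⟨T.mul_mem (T.mul_mem ht hy.1) (T.inv_mem ht), hP.conj_mem y hy.2 t⟩
  have hNV : N ≤ (T ⊓ P) ⊔ D := by
    have hlt : D < (T ⊓ P) ⊔ D := by
      refine lt_of_le_of_ne le_sup_right fun h => hMP.not_ge fun x hx => ?_
      obtain ⟨m, hm, t, ht, rfl⟩ := hfac x
      have htP : t ∈ P := by simpa using P.mul_mem (P.inv_mem (hMP.le hm)) hx
      refine M.mul_mem hm (hDM ?_)
      rw [h]; exact Subgroup.mem_sup_left ⟨ht, htP⟩
    obtain ⟨N', hN', hle⟩ := exists_chief hD hV hlt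
    rw [← hu N' hN' (hle.trans (sup_le inf_le_right hDP))]
    exact hle
  have hchain := PChain.map' (fun X : Subgroup T => (X ⊓ N.subgroupOf T).map T.subtype ⊔ D)
    (fun X hX => by
      refine hnorm _ ?_ ?_
      · rintro _ ⟨x, hx, rfl⟩; exact hNP hx.2
      · rintro t ht _ ⟨x, hx, rfl⟩
        exact ⟨⟨t, ht⟩ * x * ⟨t, ht⟩⁻¹, ⟨hX.conj_mem x hx.1 _, hc.1.conj_mem _ hx.2 t⟩, rfl⟩)
    (fun a b h => sup_le_sup_right (Subgroup.map_mono (inf_le_inf_right _ h)) _)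
    (fun B A hB hA hBA => by
      have h1 : ((B ⊓ N.subgroupOf T).map T.subtype ⊔ D).relIndex ((A ⊓ N.subgroupOf T).map T.subtype ⊔ D)
          = ((B ⊓ N.subgroupOf T).map T.subtype ⊔ D).relIndex ((A ⊓ N.subgroupOf T).map T.subtype) := by
        refine relIndex_of_mul le_sup_left fun r hr => ?_
        rw [Subgroup.mem_sup_of_normal_right] at hr
        obtain ⟨y, hy, d, hd, rfl⟩ := hr
        exact ⟨y, hy, d, Subgroup.mem_sup_right hd, rfl⟩
      show (((B ⊓ N.subgroupOf T).map T.subtype ⊔ D)).relIndex _ ∣ _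
      rw [h1]
      refine (Subgroup.relIndex_dvd_of_le_left _ (le_sup_left :
        (B ⊓ N.subgroupOf T).map T.subtype ≤ _)).trans ?_
      rw [Subgroup.relIndex_map_map_of_injective _ _ T.subtype_injective]
      have h2 : (B ⊓ N.subgroupOf T).relIndex (A ⊓ N.subgroupOf T) = B.relIndex (A ⊓ N.subgroupOf T) := by
        rw [← Subgroup.inf_relIndex_right B (A ⊓ N.subgroupOf T)]
        congr 1
        rw [← inf_assoc, inf_eq_left.2 hBA]
      rw [h2]
      exact relIndex_dvd_right hB inf_le_left) (pchain_of_supersoluble hT)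
  have e1 : ((⊥ : Subgroup T) ⊓ N.subgroupOf T).map T.subtype ⊔ D = D := by simp
  have e2 : ((⊤ : Subgroup T) ⊓ N.subgroupOf T).map T.subtype ⊔ D = N := by
    rw [top_inf_eq, Subgroup.subgroupOf_map_subtype]
    refine le_antisymm (sup_le inf_le_left hc.2.2.1.le) fun x hx => ?_
    have := hNV hx
    rw [Subgroup.mem_sup_of_normal_right] at this
    obtain ⟨t, ht, d, hd, rfl⟩ := this
    have htN : t ∈ N := by simpa using N.mul_mem hx (N.inv_mem (hc.2.2.1.le hd))
    exact Subgroup.mul_mem_sup ⟨htN, ht.1⟩ hd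
  simp only [e1, e2] at hchain
  exact hchain.chief hc

end

section
variable {G : Type u} [Group G] [Finite G] 

theorem normal_of_sylows {N : Subgroup G}
    (h : ∀ q : ℕ, q.Prime → ∃ Q, IsSylowIn q Q ⊤ ∧ ∀ g ∈ Q, ∀ n ∈ N, g * n * g⁻¹ ∈ N) : N.Normal := by
  rw [← Subgroup.normalizer_eq_top_iff, ← Subgroup.index_eq_one]
  by_contra hne
  obtain ⟨q, hq, hd⟩ := Nat.exists_prime_and_dvd hne
  obtain ⟨Q, hQ, hn⟩ := h q hq
  have hle : Q ≤ Subgroup.normalizer N := by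
    intro g hg
    rw [Subgroup.mem_normalizer_iff]
    intro n
    refine ⟨fun hN => hn g hg n hN, fun hN => ?_⟩
    have := hn g⁻¹ (Q.inv_mem hg) _ hN
    simpa [mul_assoc] using this
  have h3 := hQ.2.2
  apply h3
  have : (Q.subgroupOf ⊤).index = Q.index := by
    show Q.relIndex ⊤ = _
    exact Subgroup.relIndex_top_right Q
  rw [this]
  exact hd.trans (Subgroup.index_dvd_of_le hle)

theorem b1 {p q : ℕ} (hp : p.Prime) (hq : q.Prime) (hpq : q ≠ p) {P M T N N1 Q : Subgroup G}
    (hP : P.Normal) (hPp : IsPGroup p P) (hMP : M ≤ P) (hT : T.Normal) (hs : SPermutable (M ⊔ T))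
    (hTP : T ⊓ P ≤ M) (hN : N.Normal) (hNP : N ≤ P) (hN1 : M ⊓ N = N1) (hQ : IsSylowIn q Q ⊤) :
    ∀ g ∈ Q, ∀ n ∈ N1, g * n * g⁻¹ ∈ N1 := by
  intro g hg n hn
  rw [← hN1] at hn ⊢
  refine ⟨?_, hN.conj_mem n hn.2 g⟩
  have hr : g * n * g⁻¹ ∈ P := hP.conj_mem n (hNP hn.2) g
  set r := g * n * g⁻¹ with hrdef
  have h1 : r ∈ (M ⊔ T) ⊔ Q := by
    have hgs : g ∈ (M ⊔ T) ⊔ Q := Subgroup.mem_sup_right hg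
    have hns : n ∈ (M ⊔ T) ⊔ Q := Subgroup.mem_sup_left (Subgroup.mem_sup_left hn.1)
    exact Subgroup.mul_mem _ (Subgroup.mul_mem _ hgs hns) (Subgroup.inv_mem _ hgs)
  obtain ⟨a, ha, y, hy, e⟩ := mem_sup_of_perm (hs q hq Q hQ) h1
  rw [Subgroup.mem_sup_of_normal_right] at ha
  obtain ⟨m, hm, t, ht, rfl⟩ := ha
  have hyT : y ∈ T := by
    have h2 : (QuotientGroup.mk' T) y = (QuotientGroup.mk' T) (m⁻¹ * r) := by
      rw [e]
      have : (QuotientGroup.mk' T) t = 1 := (QuotientGroup.eq_one_iff t).2 ht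
      simp only [map_mul, map_inv, this]
      group
    have hmr : m⁻¹ * r ∈ P := P.mul_mem (P.inv_mem (hMP hm)) hr
    obtain ⟨k, hk⟩ := hPp ⟨_, hmr⟩
    have hk : (m⁻¹ * r) ^ p ^ k = 1 := congrArg Subtype.val hk
    obtain ⟨j, hj⟩ := hQ.2.1 ⟨y, hy⟩
    have hj : y ^ q ^ j = 1 := congrArg Subtype.val hj
    have h3 : (QuotientGroup.mk' T y) ^ p ^ k = 1 := by rw [h2, ← map_pow, hk, map_one]
    have h4 : (QuotientGroup.mk' T y) ^ q ^ j = 1 := by rw [← map_pow, hj, map_one]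
    have h5 : Nat.Coprime (p ^ k) (q ^ j) :=
      Nat.Coprime.pow _ _ ((Nat.coprime_primes hp hq).2 hpq.symm)
    have h6 := Nat.dvd_gcd (orderOf_dvd_of_pow_eq_one h3) (orderOf_dvd_of_pow_eq_one h4)
    rw [h5.gcd_eq_one, Nat.dvd_one, orderOf_eq_one_iff] at h6
    exact (QuotientGroup.eq_one_iff y).1 h6
  have h7 : t * y ∈ P := by
    have : t * y = m⁻¹ * r := by rw [e]; group
    rw [this]; exact P.mul_mem (P.inv_mem (hMP hm)) hr
  rw [e, mul_assoc]
  exact M.mul_mem hm (hTP ⟨T.mul_mem ht hyT, h7⟩)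

theorem case_unique {p : ℕ} (hp : p.Prime) {P D N : Subgroup G} (hP : P.Normal) (hPp : IsPGroup p P)
    (hpow : ∀ x ∈ P, x ^ p ∈ D) (hcomm : ∀ x ∈ P, ∀ y ∈ P, x * y * x⁻¹ * y⁻¹ ∈ D)
    (hmax : ∀ M, IsMaximalIn M P → HasSupersolubleSupplement M ∨ UsQuasinormal M)
    (hc : IsChiefFactor N D) (hNP : N ≤ P)
    (hu : ∀ N', IsChiefFactor N' D → N' ≤ P → N' = N) : (D.relIndex N).Prime := by
  haveI := Fact.mk hp
  have hD := hc.2.1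
  have hN := hc.1
  have hDN := hc.2.2.1
  have hDP : D ≤ P := hDN.le.trans hNP
  obtain ⟨Gp, hGp⟩ := exists_sylowIn p hp (⊤ : Subgroup G)
  have hPG : P ≤ Gp := by
    have h1 : ¬ p ∣ Gp.index := by
      have := hGp.2.2
      rwa [show (Gp.subgroupOf ⊤).index = Gp.index from Subgroup.relIndex_top_right Gp] at this
    exact hPp.le_sylow_of_normal (hGp.2.1.toSylow h1)
  obtain ⟨N1, hDN1, hN1, hinv⟩ := exists_N1 hp hGp.2.1 hD hN hDN (hNP.trans hPG)
    (fun x hx y hy => hcomm x (hNP hx) y (hNP hy))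
  obtain ⟨M, hN1M, hNM, hM⟩ := exists_M hp hNP hpow hcomm hDN1 hN1.1
  have hDM := hDN1.trans hN1M
  have hMN : M ⊓ N = N1 := by
    by_contra hne
    have hlt : N1 < M ⊓ N := lt_of_le_of_ne (le_inf hN1M hN1.1.le) (Ne.symm hne)
    exact hNM (inf_eq_right.1 (hN1.2 _ hlt inf_le_right))
  have hNp : IsPGroup p N := hPp.to_le hNP
  have hcov : ∀ W : Subgroup G, W.Normal → D < W → W ≤ P → N ≤ W := by
    intro W hW hDW hWP
    obtain ⟨N', hN', hle⟩ := exists_chief hD hW hDW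
    rw [← hu N' hN' (hle.trans hWP)]; exact hle
  have hcore : M.normalCore = D := by
    by_contra hne
    have hlt : D < M.normalCore := lt_of_le_of_ne (Subgroup.normal_le_normalCore.2 hDM) (Ne.symm hne)
    exact hNM ((hcov _ inferInstance hlt ((Subgroup.normalCore_le M).trans hM.1.le)).trans
      (Subgroup.normalCore_le M))
  rcases hmax M hM with ⟨T, hT, hMT⟩ | ⟨T, hT, hs, hZ⟩
  · exact case_a hP hc hNP hcomm hDM hM.1 hu hT hMT
  by_cases hND : N1 = D
  · subst hND; exact max_prime hp hNp hc hN1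
  by_cases hTP : T ⊓ P ≤ M
  · exfalso
    have hnor : N1.Normal := normal_of_sylows fun q hq => by
      by_cases hqp : q = p
      · subst hqp; exact ⟨Gp, hGp, hinv⟩
      · obtain ⟨Q, hQ⟩ := exists_sylowIn q hq (⊤ : Subgroup G)
        exact ⟨Q, hQ, b1 hp hq hqp hP hPp hM.1.le hT hs hTP hN hNP hMN hQ⟩
    exact hc.2.2.2 N1 hnor (lt_of_le_of_ne hDN1 (Ne.symm hND)) hN1.1
  · have hW : D < (T ⊓ P) ⊔ D := lt_of_le_of_ne le_sup_right fun h => hTP (by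
      refine le_trans ?_ hDM
      rw [h]; exact le_sup_left)
    have hNW := hcov _ (by infer_instance) hW (sup_le inf_le_right hDP)
    have hlt : D < N1 := lt_of_le_of_ne hDN1 (Ne.symm hND)
    obtain ⟨x, hx, hxD⟩ := SetLike.not_le_iff_exists.1 hlt.not_ge
    have hxW := hNW (hN1.1.le hx)
    rw [Subgroup.mem_sup_of_normal_right] at hxW
    obtain ⟨t, ht, d, hd, rfl⟩ := hxW
    have htN1 : t ∈ N1 := by simpa using N1.mul_mem hx (N1.inv_mem (hDN1 hd))
    have htD : t ∉ D := fun h => hxD (D.mul_mem h hd)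
    obtain ⟨M0, hM0, hch, hle⟩ := uhyper_le (G := G ⧸ M.normalCore)
    have h1 := PChain.comap' (QuotientGroup.mk' M.normalCore) hch
    have h2 : (⊥ : Subgroup (G ⧸ M.normalCore)).comap (QuotientGroup.mk' M.normalCore) = D := by
      rw [MonoidHom.comap_bot, QuotientGroup.ker_mk', hcore]
    rw [h2] at h1
    have h3 := PChain.inf hN h1
    rw [inf_eq_left.2 hDN.le] at h3
    set Zc := M0.comap (QuotientGroup.mk' M.normalCore) with hZc
    have h4 : t ∈ Zc ⊓ N := ⟨hle (hZ t ⟨hN1M htN1, ht.1⟩), hN1.1.le htN1⟩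
    have h5 : Zc ⊓ N = N := by
      have hZn : (Zc ⊓ N).Normal := by
        haveI := hM0.comap (QuotientGroup.mk' M.normalCore)
        infer_instance
      have hDl : D < Zc ⊓ N := lt_of_le_of_ne h3.le fun h => htD (h ▸ h4)
      by_contra hne
      exact hc.2.2.2 _ hZn hDl (lt_of_le_of_ne inf_le_right hne)
    rw [h5] at h3
    exact h3.chief hc

theorem chain_lemma {p : ℕ} (hp : p.Prime) {P Φ : Subgroup G} (hP : P.Normal) (hPp : IsPGroup p P)
    (hpow : ∀ x ∈ P, x ^ p ∈ Φ) (hcomm : ∀ x ∈ P, ∀ y ∈ P, x * y * x⁻¹ * y⁻¹ ∈ Φ)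
    (hmax : ∀ M, IsMaximalIn M P → HasSupersolubleSupplement M ∨ UsQuasinormal M)
    (hΦ : Φ.Normal) (hΦP : Φ ≤ P) : PChain Φ P := by
  suffices h : ∀ D : Subgroup G, D.Normal → Φ ≤ D → D ≤ P → PChain D P from h Φ hΦ le_rfl hΦP
  intro D
  induction D using WellFoundedGT.induction with
  | ind D ih =>
  intro hD hΦD hDP
  rcases eq_or_lt_of_le hDP with rfl | hlt
  · exact Relation.ReflTransGen.refl
  obtain ⟨N, hc, hNP⟩ := exists_chief hD hP hlt
  have hfin : (D.relIndex N).Prime → PChain D P := fun h =>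
    Relation.ReflTransGen.head ⟨hD, hc.1, hc.2.2.1.le, h⟩
      (ih N hc.2.2.1 hc.1 (hΦD.trans hc.2.2.1.le) hNP)
  by_cases hu : ∀ N', IsChiefFactor N' D → N' ≤ P → N' = N
  · exact hfin (case_unique hp hP hPp (fun x hx => hΦD (hpow x hx))
      (fun x hx y hy => hΦD (hcomm x hx y hy)) hmax hc hNP hu)
  push Not at hu
  obtain ⟨N', hc', hN'P, hne⟩ := hu
  have h1 := PChain.inf hc.1 (ih N' hc'.2.2.1 hc'.1 (hΦD.trans hc'.2.2.1.le) hN'P)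
  rw [inf_eq_right.2 hNP] at h1
  have h2 : N' ⊓ N = D := by
    by_contra h
    have hl : D < N' ⊓ N := lt_of_le_of_ne (le_inf hc'.2.2.1.le hc.2.2.1.le) (Ne.symm h)
    haveI := hc.1
    haveI := hc'.1
    have e1 : N' ⊓ N = N := by
      by_contra h'
      exact hc.2.2.2 _ inferInstance hl (lt_of_le_of_ne inf_le_right h')
    have e2 : N' ⊓ N = N' := by
      by_contra h'
      exact hc'.2.2.2 _ inferInstance hl (lt_of_le_of_ne inf_le_left h')
    exact hne (e2.symm.trans e1)
  rw [h2] at h1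
  exact hfin (h1.chief hc)

end

section
variable {G : Type u} [Group G] [Finite G] 

def Phi (P : Subgroup G) : Subgroup G := (frattini P).map P.subtype

theorem phi_le (P : Subgroup G) : Phi P ≤ P := Subgroup.map_subtype_le _

theorem phi_normal {P : Subgroup G} (hP : P.Normal) : (Phi P).Normal := by
  unfold Phi; infer_instance

theorem mem_phi {P : Subgroup G} {x : G} (hx : x ∈ P)
    (h : ∀ M : Subgroup P, IsCoatom M → (⟨x, hx⟩ : P) ∈ M) : x ∈ Phi P := by
  refine ⟨⟨x, hx⟩, ?_, rfl⟩
  unfold frattini Order.radical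
  simp only [Subgroup.mem_iInf, SetLike.mem_coe]
  exact h

theorem maxTop {X : Type*} [Group X] {M : Subgroup X} (h : IsCoatom M) : IsMaximalIn M ⊤ :=
  ⟨h.1.lt_top, fun L hL _ => h.2 L hL⟩

theorem phi_pow {p : ℕ} (hp : p.Prime) {P : Subgroup G} (hP : IsPGroup p P) : ∀ x ∈ P, x ^ p ∈ Phi P := by
  intro x hx
  refine mem_phi (P.pow_mem hx p) fun M hM => ?_
  by_contra hn
  have hPt : IsPGroup p (⊤ : Subgroup P) := hP.to_subgroup ⊤
  set y : P := ⟨x, hx⟩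
  have e : (⟨x ^ p, P.pow_mem hx p⟩ : P) = y ^ p := rfl
  rw [e] at hn
  obtain ⟨m, hm, k, h⟩ := FS.max_mul hp hPt (maxTop hM) (Subgroup.mem_top (y ^ p)) hn (Subgroup.mem_top y)
  have h1 : y ^ (1 - p * k : ℤ) ∈ M := by
    have : m = y ^ (1 - p * k : ℤ) := by
      rw [zpow_sub, zpow_one, zpow_mul, zpow_natCast]
      exact eq_mul_inv_of_mul_eq h.symm
    rw [← this]; exact hm
  obtain ⟨j, hj⟩ := hP y
  have hcop : IsCoprime ((p ^ j : ℕ) : ℤ) (1 - p * k : ℤ) := by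
    have : IsCoprime (p : ℤ) (1 - p * k) := ⟨k, 1, by ring⟩
    rw [Nat.cast_pow]
    exact this.pow_left
  obtain ⟨u, v, huv⟩ := hcop
  have hy : y ∈ M := by
    have : y = (y ^ (1 - p * k : ℤ)) ^ v := by
      conv_lhs => rw [← zpow_one y, ← huv, zpow_add, mul_comm u, zpow_mul, zpow_natCast, hj, one_zpow, one_mul,
        mul_comm v, zpow_mul]
    rw [this]; exact M.zpow_mem h1 v
  exact hn (M.pow_mem hy p)

theorem phi_comm {p : ℕ} (hp : p.Prime) {P : Subgroup G} (hP : IsPGroup p P) :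
    ∀ x ∈ P, ∀ y ∈ P, x * y * x⁻¹ * y⁻¹ ∈ Phi P := by
  intro x hx y hy
  refine mem_phi (P.mul_mem (P.mul_mem (P.mul_mem hx hy) (P.inv_mem hx)) (P.inv_mem hy)) fun M hM => ?_
  have hPt : IsPGroup p (⊤ : Subgroup P) := hP.to_subgroup ⊤
  have hn : M.Normal := by
    have := max_normal hp hPt (maxTop hM)
    exact ⟨fun n hn g => this.conj_mem ⟨n, trivial⟩ hn ⟨g, trivial⟩⟩
  set a : P := ⟨x, hx⟩
  set b : P := ⟨y, hy⟩
  show a * b * a⁻¹ * b⁻¹ ∈ M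
  by_cases ha : a ∈ M
  · have := M.mul_mem ha (hn.conj_mem _ (M.inv_mem ha) b)
    convert this using 1; group
  obtain ⟨m, hm, k, h⟩ := FS.max_mul hp hPt (maxTop hM) (Subgroup.mem_top a) ha (Subgroup.mem_top b)
  have := M.mul_mem (hn.conj_mem _ hm a) (M.inv_mem hm)
  convert this using 1
  rw [h]; group

theorem phi_nongen {P X : Subgroup G} (hX : X ≤ P) (h : P ≤ X ⊔ Phi P) : P ≤ X := by
  have h1 : X.subgroupOf P ⊔ frattini P = ⊤ := by
    apply Subgroup.map_injective P.subtype_injective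
    rw [Subgroup.map_sup, Subgroup.map_subgroupOf_eq_of_le hX]
    apply le_antisymm
    · rw [← MonoidHom.range_eq_map, Subgroup.range_subtype]
      exact sup_le hX (phi_le P)
    · rw [← MonoidHom.range_eq_map, Subgroup.range_subtype]
      exact h
  exact Subgroup.subgroupOf_eq_top.1 (frattini_nongenerating h1)

theorem phi_le_frattini {P : Subgroup G} (hP : P.Normal) : Phi P ≤ frattini G := by
  unfold frattini Order.radical
  refine le_iInf₂ fun M hM => ?_
  by_contra hn
  have hs : M ⊔ Phi P = ⊤ := hM.2 _ (lt_of_le_of_ne le_sup_left fun h => hn (by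
    rw [h]; exact le_sup_right))
  haveI := phi_normal hP
  have : P ≤ M ⊓ P := by
    apply phi_nongen inf_le_right
    intro x hx
    have h1 : x ∈ M ⊔ Phi P := by rw [hs]; trivial
    rw [Subgroup.mem_sup_of_normal_right] at h1
    obtain ⟨m, hm, f, hf, rfl⟩ := h1
    have : m ∈ P := by simpa using P.mul_mem hx (P.inv_mem (phi_le P hf))
    exact Subgroup.mul_mem_sup ⟨hm, this⟩ hf
  exact hn ((phi_le P).trans (this.trans inf_le_left))

theorem phi_chain {p : ℕ} (hp : p.Prime) {P : Subgroup G} (hP : P.Normal) (hPp : IsPGroup p P)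
    (hmax : ¬ IsCyclic P → ∀ M, IsMaximalIn M P → ¬ HasSupersolubleSupplement M → UsQuasinormal M) :
    PChain (Phi P) P := by
  by_cases hc : IsCyclic P
  · obtain ⟨g, hg⟩ := hc.exists_generator
    refine pchain_of_cyclic P hP g g.2 _ (phi_normal hP) (phi_le P) fun x hx => ?_
    obtain ⟨m, hm⟩ := hg ⟨x, hx⟩
    refine ⟨m, ?_⟩
    have : (g : G) ^ m = x := congrArg Subtype.val hm
    rw [this]; simp
  · refine chain_lemma hp hP hPp (phi_pow hp hPp) (phi_comm hp hPp) (fun M hM => ?_) (phi_normal hP) (phi_le P)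
    by_cases h : HasSupersolubleSupplement M
    · exact .inl h
    · exact .inr (hmax hc M hM h)

end

section
variable {G : Type u} [Group G] [Finite G] 

theorem le_of_sylows {E L : Subgroup G}
    (h : ∀ p : ℕ, p.Prime → p ∣ Nat.card E → ∃ P, IsSylowIn p P E ∧ P ≤ L) : E ≤ L := by
  rw [← Subgroup.relIndex_eq_one]
  by_contra hne
  obtain ⟨q, hq, hd⟩ := Nat.exists_prime_and_dvd hne
  obtain ⟨P, hP, hPL⟩ := h q hq (hd.trans (Subgroup.index_dvd_card _))
  exact hP.2.2 (hd.trans (Subgroup.relIndex_dvd_of_le_left E hPL))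

theorem pg_iff {p : ℕ} [Fact p.Prime] {x : G} {k : ℕ} (h : x ^ p ^ k = 1) : IsPGroup p (Subgroup.zpowers x) := by
  rintro ⟨_, j, rfl⟩
  refine ⟨k, Subtype.ext ?_⟩
  show (x ^ j) ^ p ^ k = 1
  rw [← zpow_natCast, zpow_comm, zpow_natCast, h, one_zpow]

theorem sylow_nil {F : Subgroup G} (hF : F.Normal) (hn : Group.IsNilpotent F) {p : ℕ} (hp : p.Prime) :
    ∃ P, IsSylowIn p P F ∧ P.Normal ∧ ∀ x ∈ F, IsPGroup p (Subgroup.zpowers x) → x ∈ P := by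
  haveI := Fact.mk hp
  let S : Sylow p F := default
  have hS : (S : Subgroup F).Normal := by
    have h := (Group.isNilpotent_of_finite_tfae (G := F)).out 0 3
    exact (h.1 hn) p inferInstance S
  haveI : (S : Subgroup F).Characteristic := Sylow.characteristic_of_normal S hS
  refine ⟨(S : Subgroup F).map F.subtype, ⟨Subgroup.map_subtype_le _, S.isPGroup'.map _, ?_⟩, inferInstance, ?_⟩
  · have : ((S : Subgroup F).map F.subtype).subgroupOf F = S :=
      Subgroup.comap_map_eq_self_of_injective F.subtype_injective _
    rw [this]
    exact S.not_dvd_index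
  · intro x hx hxp
    have h1 : IsPGroup p (Subgroup.zpowers (⟨x, hx⟩ : F)) := by
      obtain ⟨k, hk⟩ := hxp ⟨x, Subgroup.mem_zpowers x⟩
      have hk : x ^ p ^ k = 1 := congrArg Subtype.val hk
      exact pg_iff (k := k) (Subtype.ext hk)
    have h2 : IsPGroup p (Subgroup.zpowers (⟨x, hx⟩ : F) ⊔ S : Subgroup F) :=
      h1.to_sup_of_normal_right S.isPGroup'
    have h3 := S.is_maximal' h2 le_sup_right
    refine ⟨⟨x, hx⟩, ?_, rfl⟩
    have : (⟨x, hx⟩ : F) ∈ (Subgroup.zpowers (⟨x, hx⟩ : F) ⊔ S : Subgroup F) :=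
      Subgroup.mem_sup_left (Subgroup.mem_zpowers _)
    rwa [h3] at this

theorem comm_aux {x y f : G} (h1 : y * f = f * y) (h2 : y * (x⁻¹ * f * x) = (x⁻¹ * f * x) * y) :
    (y * x * y⁻¹ * x⁻¹) * f = f * (y * x * y⁻¹ * x⁻¹) := by
  have h3 : y⁻¹ * (x⁻¹ * f * x) = (x⁻¹ * f * x) * y⁻¹ := by
    have := (show Commute y _ from h2).inv_left
    exact this
  calc (y * x * y⁻¹ * x⁻¹) * f = y * x * (y⁻¹ * (x⁻¹ * f * x)) * x⁻¹ := by group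
    _ = (y * f) * x * y⁻¹ * x⁻¹ := by rw [h3]; group
    _ = f * (y * x * y⁻¹ * x⁻¹) := by rw [h1]; group

theorem pg_of_mem {p : ℕ} {P : Subgroup G} (hP : IsPGroup p P) {x : G} (hx : x ∈ P) :
    IsPGroup p (Subgroup.zpowers x) := hP.to_le (by simpa using hx)

theorem pg_conj {p : ℕ} [Fact p.Prime] {x g : G} (h : IsPGroup p (Subgroup.zpowers x)) :
    IsPGroup p (Subgroup.zpowers (g * x * g⁻¹)) := by
  obtain ⟨k, hk⟩ := h ⟨x, Subgroup.mem_zpowers x⟩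
  have hk : x ^ p ^ k = 1 := congrArg Subtype.val hk
  exact pg_iff (k := k) (by rw [conj_pow, hk]; simp)

theorem conj_in {F K H : Subgroup G} (hF : F.Normal) (hFn : Group.IsNilpotent F) (hK : K.Normal)
    (hC : ∀ x ∈ K, (∀ f ∈ F, x * f = f * x) → x ∈ F)
    (hcom : ∀ p q : ℕ, p.Prime → q.Prime → p ≠ q → ∀ x ∈ K, IsPGroup q (Subgroup.zpowers x) →
      ∀ f ∈ F, IsPGroup p (Subgroup.zpowers f) → x * f = f * x)
    {q r : ℕ} (hq : q.Prime) (hr : r.Prime) (hqr : q ≠ r) {x y : G} (hx : x ∈ K) (hy : y ∈ K)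
    (hxq : IsPGroup q (Subgroup.zpowers x)) (hyr : IsPGroup r (Subgroup.zpowers y))
    {S : Subgroup G} (hS : S.Normal) (hSq : IsPGroup q S)
    (hSF : ∀ x ∈ F, IsPGroup q (Subgroup.zpowers x) → x ∈ S) :
    ∃ c ∈ S, c ∈ K ∧ y * x * y⁻¹ = c * x := by
  haveI := Fact.mk hq
  haveI := Fact.mk hr
  set c := y * x * y⁻¹ * x⁻¹ with hc
  have hcK : c ∈ K := K.mul_mem (hK.conj_mem x hx y) (K.inv_mem hx)
  have hcF' : F ≤ Subgroup.centralizer {c} := by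
    refine le_of_sylows fun p hp _ => ?_
    obtain ⟨P, hP⟩ := exists_sylowIn p hp F
    refine ⟨P, hP, fun f hf => ?_⟩
    rw [Subgroup.mem_centralizer_singleton_iff]
    have hfF := hP.1 hf
    have hfp := pg_of_mem hP.2.1 hf
    haveI := Fact.mk hp
    have hcon : ∀ g : G, g⁻¹ * f * g ∈ F ∧ IsPGroup p (Subgroup.zpowers (g⁻¹ * f * g)) := fun g =>
      ⟨by simpa using hF.conj_mem f hfF g⁻¹, by
        have := pg_conj (g := g⁻¹) hfp
        rwa [inv_inv] at this⟩
    by_cases hpr : p = r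
    · have hpq : p ≠ q := by rw [hpr]; exact hqr.symm
      have h1 := comm_aux (x := y) (y := x) (f := f) (hcom p q hp hq hpq x hx hxq f hfF hfp)
        (hcom p q hp hq hpq x hx hxq _ (hcon y).1 (hcon y).2)
      have h2 := (show Commute _ f from h1).inv_left
      have h3 : (x * y * x⁻¹ * y⁻¹)⁻¹ = c := by rw [hc]; group
      rw [h3] at h2
      first | exact h2 | exact h2.symm
    · have h2 := comm_aux (x := x) (y := y) (f := f) (hcom p r hp hr hpr y hy hyr f hfF hfp)
        (hcom p r hp hr hpr y hy hyr _ (hcon x).1 (hcon x).2)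
      first | exact h2 | exact h2.symm
  have hcF : c ∈ F := hC c hcK fun f hf => by
    have := hcF' hf
    rw [Subgroup.mem_centralizer_singleton_iff] at this
    first | exact this | exact this.symm
  obtain ⟨a, m, hm, hn⟩ := Nat.exists_eq_pow_mul_and_not_dvd (orderOf_pos c).ne' q hq.ne_one
  have hcop : IsCoprime ((q ^ a : ℕ) : ℤ) (m : ℤ) :=
    Nat.isCoprime_iff_coprime.2 (Nat.Coprime.pow_left a ((Nat.Prime.coprime_iff_not_dvd hq).2 hm))
  obtain ⟨u, v, huv⟩ := hcop
  set c' := c ^ (u * (q ^ a : ℕ)) with hc'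
  set d := c ^ (v * m) with hd
  have hcn : c ^ ((q ^ a * m : ℕ) : ℤ) = 1 := by rw [zpow_natCast, ← hn, pow_orderOf_eq_one]
  have e1 : c = c' * d := by rw [hc', hd, ← zpow_add, huv, zpow_one]
  have e2 : c' ^ m = 1 := by
    rw [hc', ← zpow_natCast, ← zpow_mul, mul_assoc, ← Nat.cast_mul, mul_comm, zpow_mul, hcn, one_zpow]
  have e3 : d ^ q ^ a = 1 := by
    rw [hd, ← zpow_natCast, ← zpow_mul, mul_assoc, ← Nat.cast_mul, mul_comm, mul_comm m, zpow_mul, hcn, one_zpow]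
  have hdS : d ∈ S := hSF d (F.zpow_mem hcF _) (pg_iff e3)
  have hc'F : c' ∈ F := F.zpow_mem hcF _
  have hc'x : Commute c' x := by
    have : Subgroup.zpowers c' ≤ Subgroup.centralizer {x} := by
      refine le_of_sylows fun p hp hpd => ?_
      obtain ⟨P, hP⟩ := exists_sylowIn p hp (Subgroup.zpowers c')
      refine ⟨P, hP, fun f hf => ?_⟩
      rw [Subgroup.mem_centralizer_singleton_iff]
      have hpq : p ≠ q := by
        rintro rfl
        rw [Nat.card_zpowers] at hpd
        exact hm (hpd.trans (orderOf_dvd_of_pow_eq_one e2))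
      have hfF : f ∈ F := (show Subgroup.zpowers c' ≤ F by simpa using hc'F) (hP.1 hf)
      have := hcom p q hp hq hpq x hx hxq f hfF (pg_of_mem hP.2.1 hf)
      first | exact this | exact this.symm
    have := this (Subgroup.mem_zpowers c')
    rw [Subgroup.mem_centralizer_singleton_iff] at this
    first | exact this | exact this.symm
  have hc'd : Commute c' d := (Commute.refl c).zpow_zpow _ _
  have hw : Commute c' (d * x) := hc'd.mul_right hc'x
  have hz : y * x * y⁻¹ = c' * (d * x) := by
    rw [← mul_assoc, ← e1, hc]; group
  have hwq : IsPGroup q (S ⊔ Subgroup.zpowers x : Subgroup G) := hSq.to_sup_of_normal_left hxq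
  obtain ⟨j, hj⟩ := hwq ⟨d * x, Subgroup.mul_mem_sup hdS (Subgroup.mem_zpowers x)⟩
  have hj : (d * x) ^ q ^ j = 1 := congrArg Subtype.val hj
  obtain ⟨i, hi⟩ := pg_conj (g := y) hxq ⟨_, Subgroup.mem_zpowers _⟩
  have hi : (y * x * y⁻¹) ^ q ^ i = 1 := congrArg Subtype.val hi
  have h1 : c' ^ q ^ (i + j) = 1 := by
    have h2 : (y * x * y⁻¹) ^ q ^ (i + j) = 1 := by rw [pow_add, pow_mul, hi, one_pow]
    have h3 : (d * x) ^ q ^ (i + j) = 1 := by rw [add_comm, pow_add, pow_mul, hj, one_pow]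
    rw [hz, hw.mul_pow, h3, mul_one] at h2
    exact h2
  have h4 : c' = 1 := by
    have h6 := Nat.dvd_gcd (orderOf_dvd_of_pow_eq_one h1) (orderOf_dvd_of_pow_eq_one e2)
    have h5 : Nat.Coprime (q ^ (i + j)) m :=
      Nat.Coprime.pow_left _ ((Nat.Prime.coprime_iff_not_dvd hq).2 hm)
    rwa [h5.gcd_eq_one, Nat.dvd_one, orderOf_eq_one_iff] at h6
  refine ⟨d, hdS, K.zpow_mem hcK _, ?_⟩
  rw [hz, h4, one_mul]

theorem K_nilp {F K : Subgroup G} (hF : F.Normal) (hFn : Group.IsNilpotent F) (hK : K.Normal)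
    (hC : ∀ x ∈ K, (∀ f ∈ F, x * f = f * x) → x ∈ F)
    (hcom : ∀ p q : ℕ, p.Prime → q.Prime → p ≠ q → ∀ x ∈ K, IsPGroup q (Subgroup.zpowers x) →
      ∀ f ∈ F, IsPGroup p (Subgroup.zpowers f) → x * f = f * x) : Group.IsNilpotent K := by
  refine ((Group.isNilpotent_of_finite_tfae (G := K)).out 0 3).2 ?_
  intro q hq Q
  have hq' := hq.out
  obtain ⟨S, hS, hSn, hSF⟩ := sylow_nil hF hFn hq'
  have hSQ : S.subgroupOf K ≤ Q :=
    IsPGroup.le_sylow_of_normal (hS.2.1.comap_of_injective _ K.subtype_injective) Q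
  have pgm : ∀ {r : ℕ} {R : Subgroup K}, IsPGroup r R → ∀ x ∈ R, IsPGroup r (Subgroup.zpowers (x : G)) := by
    intro r R hR x hx
    have h1 : IsPGroup r (R.map K.subtype) := hR.map _
    exact pg_of_mem h1 ⟨x, hx, rfl⟩
  refine normal_of_sylows fun r hr => ?_
  by_cases hrq : r = q
  · subst hrq
    refine ⟨Q, ⟨le_top, Q.isPGroup', ?_⟩, fun g hg n hn => ?_⟩
    · rw [show ((Q : Subgroup K).subgroupOf ⊤).index = (Q : Subgroup K).index from Subgroup.relIndex_top_right _]
      exact Q.not_dvd_index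
    · exact Subgroup.mul_mem _ (Subgroup.mul_mem _ hg hn) (Subgroup.inv_mem _ hg)
  · obtain ⟨R, hR⟩ := exists_sylowIn r hr (⊤ : Subgroup K)
    refine ⟨R, hR, fun g hg n hn => ?_⟩
    obtain ⟨c, hc, hcK, e⟩ := conj_in (H := F) hF hFn hK hC hcom hq' hr (Ne.symm hrq) n.2 g.2
      (pgm Q.isPGroup' n hn) (pgm hR.2.1 g hg) hSn hS.2.1 hSF
    have : g * n * g⁻¹ = ⟨c, hcK⟩ * n := Subtype.ext e
    rw [this]
    exact Subgroup.mul_mem _ (hSQ hc) hn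

end

theorem main {𝔉 : ∀ (X : Type u) [Group X], Prop} (hF𝔉 : Form 𝔉) {G : Type u} [Group G] [Finite G]
    (H : Subgroup G) (hH : H.Normal) (hGH : 𝔉 (G ⧸ H))
    (hyp : ∀ p : ℕ, p.Prime → ∀ P : Subgroup G, IsSylowIn p P (FStarIn H) →
      ¬ IsCyclic P → ∀ M : Subgroup G, IsMaximalIn M P →
        ¬ HasSupersolubleSupplement M → UsQuasinormal M) :
    𝔉 G := by
  have hFn : Group.IsNilpotent (FStarIn H) := FS_nilpotent hyp
  have hF : (FStarIn H).Normal := FS_normal hH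
  set F := FStarIn H with hFdef
  have hK : ∀ s : Finset ℕ, (∀ p ∈ s, p.Prime) → ∃ K : Subgroup G, ∃ _ : K.Normal, 𝔉 (G ⧸ K) ∧ K ≤ H ∧
      ∀ p ∈ s, ∀ q : ℕ, q.Prime → p ≠ q → ∀ x ∈ K, IsPGroup q (Subgroup.zpowers x) →
      ∀ f ∈ F, IsPGroup p (Subgroup.zpowers f) → x * f = f * x := by
    intro s
    induction s using Finset.induction_on with
    | empty => exact fun _ => ⟨H, hH, hGH, le_rfl, by simp⟩
    | insert p s hps ih =>
      intro hs
      obtain ⟨K, hKn, h1, h2, h3⟩ := ih fun p hp => hs p (Finset.mem_insert_of_mem hp)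
      have hp := hs p (Finset.mem_insert_self p s)
      obtain ⟨P, hP, hPn, hPF⟩ := sylow_nil hF hFn hp
      obtain ⟨C, hC, hC1, hC2⟩ := hF𝔉.exists_C hp (phi_normal hPn)
        (phi_chain hp hPn hP.2.1 (hyp p hp P hP)) hP.2.1
      refine ⟨K ⊓ C, inferInstance, hF𝔉.hres G K C hKn hC h1 hC1, inf_le_left.trans h2, ?_⟩
      intro p' hp' q hq hne x hx hxq f hf hfp
      rcases Finset.mem_insert.1 hp' with rfl | hp'
      · have := phi_nongen inf_le_right (hC2 q hq (Ne.symm hne) x hx.2 hxq) (hPF f hf hfp)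
        have : f ∈ Subgroup.centralizer {x} := this.1
        rw [Subgroup.mem_centralizer_singleton_iff] at this
        first | exact this | exact this.symm
      · exact h3 p' hp' q hq hne x hx.1 hxq f hf hfp
  obtain ⟨K, hKn, hK1, hK2, hK3⟩ := hK (Nat.card F).primeFactors fun p hp => Nat.prime_of_mem_primeFactors hp
  have hcom : ∀ p q : ℕ, p.Prime → q.Prime → p ≠ q → ∀ x ∈ K, IsPGroup q (Subgroup.zpowers x) →
      ∀ f ∈ F, IsPGroup p (Subgroup.zpowers f) → x * f = f * x := by
    intro p q hp hq hne x hx hxq f hf hfp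
    by_cases hd : p ∣ Nat.card F
    · exact hK3 p (Nat.mem_primeFactors.2 ⟨hp, hd, Nat.card_pos.ne'⟩) q hq hne x hx hxq f hf hfp
    · have : f = 1 := by
        haveI := Fact.mk hp
        obtain ⟨k, hk⟩ := hfp ⟨f, Subgroup.mem_zpowers f⟩
        have hk : f ^ p ^ k = 1 := congrArg Subtype.val hk
        have h1 : orderOf f ∣ Nat.card F := by
          have := orderOf_dvd_natCard (⟨f, hf⟩ : F)
          rwa [← Subgroup.orderOf_coe] at this
        have h6 := Nat.dvd_gcd (orderOf_dvd_of_pow_eq_one hk) h1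
        rwa [(Nat.Coprime.pow_left k ((Nat.Prime.coprime_iff_not_dvd hp).2 hd)).gcd_eq_one,
          Nat.dvd_one, orderOf_eq_one_iff] at h6
      rw [this]; simp
  have hKnil : Group.IsNilpotent K := K_nilp hF hFn hKn (fun x hx h => FS_cent (hK2 hx) h) hcom
  have hKF : K ≤ F := FS_nil_le hKn hK2 hKnil
  have hGF : 𝔉 (G ⧸ F) := hF𝔉.quot_le hKF hK1
  have hB : ∀ s : Finset ℕ, (∀ p ∈ s, p.Prime) → ∃ B A : Subgroup G, B.Normal ∧ A.Normal ∧ PChain B A ∧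
      B ≤ frattini G ∧ A ≤ F ∧ ∀ p ∈ s, ∃ P, IsSylowIn p P F ∧ P ≤ A := by
    intro s
    induction s using Finset.induction_on with
    | empty => exact fun _ => ⟨⊥, ⊥, inferInstance, inferInstance, Relation.ReflTransGen.refl, bot_le, bot_le, by simp⟩
    | insert p s hps ih =>
      intro hs
      obtain ⟨B, A, hBn, hAn, hc, hBf, hAF, hA⟩ := ih fun p hp => hs p (Finset.mem_insert_of_mem hp)
      have hp := hs p (Finset.mem_insert_self p s)
      obtain ⟨P, hP, hPn, hPF⟩ := sylow_nil hF hFn hp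
      haveI := phi_normal hPn
      have h1 := PChain.sup hBn (phi_chain hp hPn hP.2.1 (hyp p hp P hP))
      have h2 := PChain.sup hPn hc
      rw [sup_comm P B] at h1
      refine ⟨_, _, inferInstance, inferInstance, h1.trans h2, sup_le (phi_le_frattini hPn) hBf,
        sup_le hAF hP.1, ?_⟩
      intro p' hp'
      rcases Finset.mem_insert.1 hp' with rfl | hp'
      · exact ⟨P, hP, le_sup_right⟩
      · obtain ⟨R, hR, hRA⟩ := hA p' hp'
        exact ⟨R, hR, hRA.trans le_sup_left⟩
  obtain ⟨B, A, hBn, hAn, hc, hBf, hAF, hA⟩ := hB (Nat.card F).primeFactors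
    fun p hp => Nat.prime_of_mem_primeFactors hp
  have hAF' : A = F := le_antisymm hAF (le_of_sylows fun p hp hd =>
    hA p (Nat.mem_primeFactors.2 ⟨hp, hd, Nat.card_pos.ne'⟩))
  rw [hAF'] at hc
  have h1 : 𝔉 (G ⧸ B) := hF𝔉.chain B F hc hGF
  exact hF𝔉.hsat G (hF𝔉.quot_le hBf h1)

end FS
end

/-- Let `𝔉` be an S-closed saturated formation of finite groups
containing all supersoluble groups, and `H ⊴ G` with `G/H ∈ 𝔉`. If every maximal
subgroup of every non-cyclic Sylow subgroup of `F*(H)` having no supersoluble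
supplement in `G` is 𝔘ₛ-quasinormal in `G`, then `G ∈ 𝔉`. -/
theorem stmt_2 {G : Type u} [Group G] [Finite G]
    (𝔉 : ∀ (X : Type u) [Group X], Prop)
    (hiso : ∀ (X Y : Type u) [Group X] [Group Y] [Finite X] [Finite Y],
      (X ≃* Y) → 𝔉 X → 𝔉 Y)
    (hhom : ∀ (X Y : Type u) [Group X] [Group Y] [Finite X] [Finite Y] (f : X →* Y),
      Function.Surjective f → 𝔉 X → 𝔉 Y)
    (hres : ∀ (X : Type u) [Group X] [Finite X] (M N : Subgroup X)
      (_ : M.Normal) (_ : N.Normal), 𝔉 (X ⧸ M) → 𝔉 (X ⧸ N) → 𝔉 (X ⧸ (M ⊓ N)))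
    (hsat : ∀ (X : Type u) [Group X] [Finite X], 𝔉 (X ⧸ frattini X) → 𝔉 X)
    (hSclosed : ∀ (X : Type u) [Group X] [Finite X] (K : Subgroup X), 𝔉 X → 𝔉 K)
    (hU : ∀ (X : Type u) [Group X] [Finite X], IsSupersoluble X → 𝔉 X)
    (H : Subgroup G) (hH : H.Normal) (hGH : 𝔉 (G ⧸ H))
    (hyp : ∀ p : ℕ, p.Prime → ∀ P : Subgroup G, IsSylowIn p P (FStarIn H) →
      ¬ IsCyclic P → ∀ M : Subgroup G, IsMaximalIn M P →
        ¬ HasSupersolubleSupplement M → UsQuasinormal M) :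
    𝔉 G := by
  exact FS.main ⟨hhom, hres, hsat, hU⟩ H hH hGH hyp
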